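/- Let n ≥ 2 and p, q > 1, and let μ be a nonzero finite even Borel measure on S^{n-1} (i.e. μ is invariant under the antipodal map u ↦ −u). Write |μ| = μ(S^{n-1}) and define Φ(K) = −(1/(p|μ|)) ∫_{S^{n-1}} h_K(v)^p dμ(v) for K ∈ K_e^n. Suppose K₀ ∈ K_e^n satisfies Ṽ_{γ_n,q}(K₀) = |μ| and Φ(K₀) ≥ Φ(K) for every K ∈ K_e^n with Ṽ_{γ_n,q}(K) = |μ|. Then for every outer unit normal selection ν for K₀ and every Borel set η ⊆ S^{n-1}, μ(η) · C̃_{p,γ_n,q}(K₀, S^{n-1}) = |μ| · C̃_{p,γ_n,q}(K₀, η); that is, μ/|μ| = C̃_{p,γ_n,q}(K₀,·)/|C̃_{p,γ_n,q}(K₀,·)|. -/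

import Mathlib

open MeasureTheory Metric Set Filter
open scoped RealInnerProductSpace ENNReal Pointwise Topology

/-- The support function of a set `K`. -/
noncomputable def supportFn {n : ℕ} (K : Set (EuclideanSpace ℝ (Fin n)))
    (v : EuclideanSpace ℝ (Fin n)) : ℝ :=
  sSup ((fun y => ⟪y, v⟫) '' K)

/-- The Gaussian dual quermassintegral `Ṽ_{γ_n,q}(K) = ∫_K e^{-|x|²/2} |x|^{q-n} dx`. -/
noncomputable def gaussDualQuermass (n : ℕ) (q : ℝ)
    (K : Set (EuclideanSpace ℝ (Fin n))) : ℝ :=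
  ∫ x in K, Real.exp (-‖x‖ ^ 2 / 2) * ‖x‖ ^ (q - (n : ℝ))

/-- The `L_p` Gaussian dual curvature measure of `K` (with respect to an outer unit normal
selection `ν`), evaluated at the Borel set `η ⊆ Sⁿ⁻¹`. -/
noncomputable def lpGaussDualCurv (n : ℕ) (p q : ℝ) (K : Set (EuclideanSpace ℝ (Fin n)))
    (ν : EuclideanSpace ℝ (Fin n) → EuclideanSpace ℝ (Fin n))
    (η : Set (EuclideanSpace ℝ (Fin n))) : ℝ≥0∞ :=
  ∫⁻ x in frontier K ∩ ν ⁻¹' η,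
    ENNReal.ofReal (⟪x, ν x⟫ ^ (1 - p) * ‖x‖ ^ (q - (n : ℝ)) * Real.exp (-‖x‖ ^ 2 / 2))
    ∂(μH[(n : ℝ) - 1])

/-- The functional `Φ(K) = -(1/(p|μ|)) ∫_{Sⁿ⁻¹} h_K(v)^p dμ(v)`. -/
noncomputable def PhiFunc (n : ℕ) (p : ℝ) (μ : Measure (EuclideanSpace ℝ (Fin n)))
    (K : Set (EuclideanSpace ℝ (Fin n))) : ℝ :=
  -(1 / (p * (μ Set.univ).toReal)) * ∫ v, supportFn K v ^ p ∂μ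

namespace GM
section
variable {E : Type*} [NormedAddCommGroup E] [InnerProductSpace ℝ E] [FiniteDimensional ℝ E]
  [MeasurableSpace E] [BorelSpace E]

/-- The open cone between the origin and the part `B` of the hyperplane `⟪·,u⟫ = 1`. -/
def slab (u : E) (B : Set E) : Set E :=
  {x | 0 < ⟪x, u⟫ ∧ ⟪x, u⟫ < 1 ∧ (⟪x, u⟫)⁻¹ • x ∈ B}

theorem slab_unit (m : ℕ) (hm : Module.finrank ℝ E = m + 1) (u : E) (hu : ‖u‖ = 1) :
    ∃ κ : ℝ≥0∞, κ ≠ 0 ∧ κ ≠ ⊤ ∧ ∀ B : Set E, MeasurableSet B → (∀ y ∈ B, ⟪y, u⟫ = 1) →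
      volume (slab u B) = κ * μH[(m : ℝ)] B := by
  have hu0 : u ≠ 0 := by rintro rfl; simp at hu
  have : Fact (Module.finrank ℝ E = m + 1) := ⟨hm⟩
  set F : Submodule ℝ E := (ℝ ∙ u)ᗮ with hF
  have hfr : Module.finrank ℝ F = m := Submodule.finrank_orthogonal_span_singleton hu0
  have hFu : ∀ y : F, ⟪(y : E), u⟫ = 0 := fun y =>
    Submodule.mem_orthogonal_singleton_iff_inner_left.1 y.2
  set P := F.orthogonalProjectionOnto with hP
  have hdec : ∀ x : E, (P x : E) = x - ⟪x, u⟫ • u := by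
    intro x
    have h1 := Submodule.starProjection_orthogonal_val (K := ℝ ∙ u) x
    rw [Submodule.starProjection_unit_singleton ℝ hu x, real_inner_comm] at h1
    exact h1
  set φ : E → F := fun x => (⟪x, u⟫)⁻¹ • P x with hφ
  have hφm : Measurable φ := by
    refine Measurable.smul (f := fun x : E => (⟪x, u⟫)⁻¹) (g := P) ?_ ?_
    · exact (by fun_prop : Continuous fun x : E => ⟪x, u⟫).measurable.inv
    · exact P.continuous.measurable
  set S : Set E := {x | 0 < ⟪x, u⟫ ∧ ⟪x, u⟫ < 1} with hS
  have hcu : Continuous fun x : E => ⟪x, u⟫ := by fun_prop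
  have hSo : IsOpen S := (isOpen_lt continuous_const hcu).inter (isOpen_lt hcu continuous_const)
  set lam : Measure F := (volume.restrict S).map φ with hlam
  have hlam_apply : ∀ B : Set F, MeasurableSet B → lam B = volume (φ ⁻¹' B ∩ S) := by
    intro B hB
    rw [hlam, Measure.map_apply hφm hB, Measure.restrict_apply (hφm hB)]
  have : IsFiniteMeasureOnCompacts lam := by
    constructor
    intro K hK
    rw [hlam_apply K hK.measurableSet]
    obtain ⟨R, hR⟩ := hK.isBounded.exists_norm_le
    refine lt_of_le_of_lt (measure_mono (t := closedBall 0 (1 + R)) ?_)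
      (isCompact_closedBall _ _).measure_lt_top
    rintro x ⟨hx, hx1, hx2⟩
    have h3 := hR _ hx
    simp only [hφ, norm_smul, norm_inv, Real.norm_eq_abs, abs_of_pos hx1] at h3
    have hRn : 0 ≤ R := le_trans (by positivity) h3
    have h4 : ‖P x‖ ≤ R := by
      have : ‖P x‖ ≤ ⟪x, u⟫ * R := by
        rw [inv_mul_le_iff₀ hx1] at h3; exact h3
      nlinarith
    have h5 : x = ⟪x, u⟫ • u + (P x : E) := by rw [hdec]; abel
    rw [mem_closedBall_zero_iff, h5]
    refine (norm_add_le _ _).trans (add_le_add ?_ h4)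
    rw [norm_smul, hu, mul_one, Real.norm_eq_abs, abs_of_pos hx1]; exact hx2.le
  have : lam.IsAddLeftInvariant := by
    constructor
    intro w
    ext B hB
    rw [Measure.map_apply (measurable_const_add w) hB, hlam_apply _ hB,
      hlam_apply _ (measurable_const_add w hB)]
    let f : Module.Dual ℝ E := (innerSL ℝ u).toLinearMap
    have hf : ∀ x, f x = ⟪x, u⟫ := fun x => by simp [f, real_inner_comm]
    have hdet : LinearMap.det (LinearMap.transvection f (w : E)) = 1 := by
      rw [LinearMap.transvection.det, hf, hFu, add_zero]
    have key := Measure.addHaar_preimage_linearMap (volume : Measure E)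
      (f := LinearMap.transvection f (w : E)) (by rw [hdet]; exact one_ne_zero) (φ ⁻¹' B ∩ S)
    rw [hdet] at key
    simp only [inv_one, abs_one, ENNReal.ofReal_one, one_mul] at key
    rw [← key]
    congr 1
    have hT : ∀ x, LinearMap.transvection f (w : E) x = x + ⟪x, u⟫ • (w : E) := fun x => by
      rw [← hf]; rfl
    have hTu : ∀ x, ⟪LinearMap.transvection f (w : E) x, u⟫ = ⟪x, u⟫ := fun x => by
      rw [hT, inner_add_left, inner_smul_left, hFu]; simp
    ext x
    have hTφ : 0 < ⟪x, u⟫ → φ (LinearMap.transvection f (w : E) x) = w + φ x := by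
      intro hx
      apply Subtype.ext
      simp only [hφ, Submodule.coe_add, Submodule.coe_smul, hdec, hTu]
      rw [hT, add_sub_right_comm, smul_add, smul_smul, inv_mul_cancel₀ hx.ne', one_smul, add_comm]
    constructor
    · rintro ⟨h1, h2⟩
      refine ⟨?_, ?_⟩
      · show φ _ ∈ B
        rw [hTφ h2.1]; exact h1
      · show _ ∧ _
        rw [hTu]; exact h2
    · rintro ⟨h1, h2⟩
      have h2' : x ∈ S := by
        have : _ ∧ _ := h2
        rw [hTu] at this; exact this
      refine ⟨?_, h2'⟩
      have : φ _ ∈ B := h1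
      rw [hTφ h2'.1] at this; exact this
  have hHaar : Measure.IsAddHaarMeasure (μH[(m : ℝ)] : Measure F) := by
    have := isAddHaarMeasure_hausdorffMeasure (E := F)
    rwa [hfr] at this
  have huniq := Measure.isAddLeftInvariant_eq_smul lam (μH[(m : ℝ)] : Measure F)
  set c := lam.addHaarScalarFactor (μH[(m : ℝ)] : Measure F)
  refine ⟨c, ?_, ENNReal.coe_ne_top, ?_⟩
  · intro hc
    have hz : lam = 0 := by
      rw [huniq]
      have : c = 0 := by exact_mod_cast hc
      rw [this, zero_smul]
    have h1 := hlam_apply univ MeasurableSet.univ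
    rw [hz] at h1
    simp only [Measure.coe_zero, Pi.zero_apply, preimage_univ, univ_inter] at h1
    have : S.Nonempty := ⟨(1/2 : ℝ) • u, by
      simp only [hS, mem_ofPred_eq, inner_smul_left, real_inner_self_eq_norm_sq, hu]; norm_num⟩
    exact (hSo.measure_ne_zero volume this) h1.symm
  · intro B hB hBu
    let ι : F → E := fun y => u + y
    have hι : Isometry ι := (IsometryEquiv.addLeft u).isometry.comp F.subtypeₗᵢ.isometry
    have hr : B ⊆ range ι := by
      intro y hy
      refine ⟨P y, ?_⟩
      simp only [ι, hdec, hBu y hy, one_smul]; abel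
    have hB1 : μH[(m : ℝ)] B = μH[(m : ℝ)] (ι ⁻¹' B) := by
      rw [hι.hausdorffMeasure_preimage (Or.inl (by positivity)), inter_eq_left.2 hr]
    have hmB : MeasurableSet (ι ⁻¹' B) := hι.continuous.measurable hB
    have : slab u B = φ ⁻¹' (ι ⁻¹' B) ∩ S := by
      ext x
      have hx : 0 < ⟪x, u⟫ → ι (φ x) = (⟪x, u⟫)⁻¹ • x := by
        intro hx
        simp only [ι, hφ, Submodule.coe_smul, hdec]
        rw [smul_sub, smul_smul, inv_mul_cancel₀ hx.ne', one_smul]; abel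
      constructor
      · rintro ⟨h1, h2, h3⟩
        refine ⟨?_, h1, h2⟩
        show ι (φ x) ∈ B
        rw [hx h1]; exact h3
      · rintro ⟨h3, h1, h2⟩
        refine ⟨h1, h2, ?_⟩
        rw [← hx h1]; exact h3
    rw [this, ← hlam_apply _ hmB, hB1, huniq]
    rfl

theorem slab_main (m : ℕ) (hm : Module.finrank ℝ E = m + 1) :
    ∃ κ : ℝ≥0∞, κ ≠ 0 ∧ κ ≠ ⊤ ∧ ∀ u : E, u ≠ 0 → ∀ B : Set E, MeasurableSet B →
      (∀ y ∈ B, ⟪y, u⟫ = 1) →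
      ENNReal.ofReal ‖u‖ * volume (slab u B) = κ * μH[(m : ℝ)] B := by
  have : Nontrivial E := Module.nontrivial_of_finrank_pos (R := ℝ) (by omega)
  obtain ⟨u0, hu0⟩ := exists_norm_eq E (zero_le_one' ℝ)
  obtain ⟨κ, h0, ht, hκ⟩ := slab_unit m hm u0 hu0
  have hunit : ∀ u : E, ‖u‖ = 1 → ∀ B : Set E, MeasurableSet B → (∀ y ∈ B, ⟪y, u⟫ = 1) →
      volume (slab u B) = κ * μH[(m : ℝ)] B := by
    intro u hu B hB hBu
    let R := Submodule.reflection (ℝ ∙ (u0 - u))ᗮ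
    have hR : R u0 = u := Submodule.reflection_sub (by rw [hu, hu0])
    have hin : ∀ x, ⟪R x, u⟫ = ⟪x, u0⟫ := fun x => by rw [← hR, R.inner_map_map]
    have h1 := hκ (R ⁻¹' B) (R.continuous.measurable hB) (fun y hy => by
      rw [← hin]; exact hBu _ hy)
    have h2 : μH[(m : ℝ)] (R ⁻¹' B) = μH[(m : ℝ)] B :=
      R.toIsometryEquiv.hausdorffMeasure_preimage m B
    have h3 : slab u0 (R ⁻¹' B) = R ⁻¹' (slab u B) := by
      ext x
      simp only [slab, mem_ofPred_eq, mem_preimage, hin, map_smul]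
    have h4 : volume (R ⁻¹' (slab u B)) = volume (slab u B) :=
      R.measurePreserving.measure_preimage_equiv (f := R.toMeasurableEquiv) _
    rw [← h4, ← h3, h1, h2]
  refine ⟨κ, h0, ht, fun u hu B hB hBu => ?_⟩
  set a := ‖u‖ with ha
  have hapos : 0 < a := norm_pos_iff.2 hu
  have h1 := hunit (a⁻¹ • u) (by rw [norm_smul, norm_inv, norm_norm, inv_mul_cancel₀ hapos.ne'])
    (a • B) (hB.const_smul₀ a) (by
      rintro _ ⟨y, hy, rfl⟩
      show ⟪a • y, a⁻¹ • u⟫ = 1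
      rw [inner_smul_left, inner_smul_right, hBu y hy]
      simp [hapos.ne'])
  have h2 : slab (a⁻¹ • u) (a • B) = a • slab u B := by
    ext x
    rw [mem_smul_set_iff_inv_smul_mem₀ hapos.ne']
    simp only [slab, mem_ofPred_eq, inner_smul_left, inner_smul_right,
      mem_smul_set_iff_inv_smul_mem₀ hapos.ne', RCLike.conj_to_real]
    rw [smul_comm a⁻¹ (a⁻¹ * ⟪x, u⟫)⁻¹ x]
  rw [h2, Measure.addHaar_smul, hm, Measure.hausdorffMeasure_smul₀ (by positivity) hapos.ne'] at h1
  have hna : ‖a‖₊ = a.toNNReal := by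
    rw [← NNReal.coe_inj]; simp [abs_of_pos hapos, hapos.le]
  rw [hna, abs_of_pos (by positivity), ENNReal.smul_def, NNReal.rpow_natCast, smul_eq_mul,
    ENNReal.coe_pow, ENNReal.ofReal_pow hapos.le, pow_succ] at h1
  change ENNReal.ofReal a ^ m * ENNReal.ofReal a * _ = κ * (ENNReal.ofReal a ^ m * _) at h1
  have hne : ENNReal.ofReal a ^ m ≠ 0 := pow_ne_zero _ (by simpa using hapos)
  have hnt : ENNReal.ofReal a ^ m ≠ ⊤ := ENNReal.pow_ne_top ENNReal.ofReal_ne_top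
  rw [mul_assoc, mul_left_comm κ] at h1
  exact (ENNReal.mul_right_inj hne hnt).1 h1

end
end GM

namespace GM
section
set_option linter.unusedSectionVars false
variable {E : Type*} [NormedAddCommGroup E] [InnerProductSpace ℝ E]

/-- Convex bodies with the origin in the interior. -/
structure IsBody (K : Set E) : Prop where
  compact : IsCompact K
  convex : Convex ℝ K
  zero : (0 : E) ∈ interior K

/-- Radial projection to the boundary. -/
noncomputable def rad (K : Set E) (x : E) : E := (gauge K x)⁻¹ • x

namespace IsBody

theorem nhds {K : Set E} (h : IsBody K) : K ∈ 𝓝 (0 : E) := mem_interior_iff_mem_nhds.1 h.zero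

theorem gcont {K : Set E} (h : IsBody K) : Continuous (gauge K) := continuous_gauge h.convex h.nhds

theorem absorbent {K : Set E} (h : IsBody K) : Absorbent ℝ K := absorbent_nhds_zero h.nhds

theorem gpos {K : Set E} (h : IsBody K) {x : E} (hx : x ≠ 0) : 0 < gauge K x :=
  (gauge_pos h.absorbent (NormedSpace.isVonNBounded_of_isBounded ℝ h.compact.isBounded)).2 hx

theorem gsmul {K : Set E} (h : IsBody K) {t : ℝ} (ht : 0 ≤ t) (x : E) : gauge K (t • x) = t * gauge K x := by
  rw [gauge_smul_of_nonneg ht, smul_eq_mul]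

theorem frontier_iff {K : Set E} (h : IsBody K) {x : E} : x ∈ frontier K ↔ gauge K x = 1 :=
  (gauge_eq_one_iff_mem_frontier h.convex h.nhds).symm

theorem mem_iff {K : Set E} (h : IsBody K) {x : E} : x ∈ K ↔ gauge K x ≤ 1 := by
  rw [gauge_le_one_iff_mem_closure h.convex h.nhds, h.compact.isClosed.closure_eq]

theorem frontier_ne {K : Set E} (h : IsBody K) {x : E} (hx : x ∈ frontier K) : x ≠ 0 := by
  rintro rfl
  have := h.frontier_iff.1 hx
  simp at this

theorem frontier_sub {K : Set E} (h : IsBody K) {x : E} (hx : x ∈ frontier K) : x ∈ K := h.mem_iff.2 (h.frontier_iff.1 hx).le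

theorem rad_mem {K : Set E} (h : IsBody K) {x : E} (hx : x ≠ 0) : rad K x ∈ frontier K := by
  rw [h.frontier_iff, rad, h.gsmul (inv_nonneg.2 (h.gpos hx).le), inv_mul_cancel₀ (h.gpos hx).ne']

theorem rad_smul {K : Set E} (h : IsBody K) {t : ℝ} (ht : 0 < t) (x : E) : rad K (t • x) = rad K x := by
  simp only [rad, h.gsmul ht.le, smul_smul]
  congr 1
  field_simp

theorem rad_frontier {K : Set E} (h : IsBody K) {x : E} (hx : x ∈ frontier K) : rad K x = x := by
  rw [rad, h.frontier_iff.1 hx]; simp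

theorem exists_bounds {K : Set E} (h : IsBody K) : ∃ r R : ℝ, 0 < r ∧ 0 < R ∧ closedBall (0 : E) r ⊆ K ∧
    K ⊆ closedBall (0 : E) R := by
  obtain ⟨r, hr, hrK⟩ := Metric.nhds_basis_closedBall.mem_iff.1 h.nhds
  obtain ⟨R, hR, hRK⟩ := h.compact.isBounded.subset_closedBall_lt 0 0
  exact ⟨r, R, hr, hR, hrK, hRK⟩

theorem gauge_lip {K : Set E} (h : IsBody K) : ∃ C : ℝ, 0 ≤ C ∧ ∀ x y, |gauge K x - gauge K y| ≤ C * ‖x - y‖ := by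
  obtain ⟨C, hC⟩ := h.convex.lipschitz_gauge h.nhds
  exact ⟨C, C.2, fun x y => by simpa [Real.dist_eq, dist_eq_norm] using hC.dist_le_mul x y⟩

end IsBody

variable [FiniteDimensional ℝ E] [MeasurableSpace E] [BorelSpace E]

theorem IsBody.rad_meas {K : Set E} (h : IsBody K) : Measurable (rad K) :=
  h.gcont.measurable.inv.smul measurable_id

/-- Pushforward of the spherical measure to the boundary by radial projection. -/
noncomputable def theta (K : Set E) : Measure E :=
  ((volume : Measure E).toSphere).map (fun u : sphere (0 : E) 1 => rad K u)

/-- The part of the unit ball over `A`. -/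
def coneball (K A : Set E) : Set E := {x | 0 < ‖x‖ ∧ ‖x‖ < 1 ∧ rad K x ∈ A}


theorem rad_comp_meas {K : Set E} (h : IsBody K) : Measurable (fun u : sphere (0 : E) 1 => rad K u) :=
  h.rad_meas.comp measurable_subtype_coe

theorem theta_apply {K : Set E} (h : IsBody K) {A : Set E} (hA : MeasurableSet A) :
    theta K A = Module.finrank ℝ E * volume (coneball K A) := by
  rw [theta, Measure.map_apply (rad_comp_meas h) hA,
    Measure.toSphere_apply' _ (rad_comp_meas h hA)]
  congr 2
  ext x
  constructor
  · rintro ⟨t, ht, _, ⟨⟨u, hu⟩, hu2, rfl⟩, rfl⟩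
    have hu1 : ‖u‖ = 1 := by simpa using hu
    have e1 : ‖t • u‖ = t := by rw [norm_smul, hu1, mul_one, Real.norm_eq_abs, abs_of_pos ht.1]
    show 0 < ‖t • u‖ ∧ ‖t • u‖ < 1 ∧ rad K (t • u) ∈ A
    rw [e1, h.rad_smul ht.1]
    exact ⟨ht.1, ht.2, hu2⟩
  · rintro ⟨h1, h2, h3⟩
    refine ⟨‖x‖, ⟨h1, h2⟩, ‖x‖⁻¹ • x, ⟨⟨‖x‖⁻¹ • x, ?_⟩, ?_, rfl⟩, ?_⟩
    · simp [norm_smul, h1.ne']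
    · show rad K _ ∈ A
      rw [h.rad_smul (inv_pos.2 h1)]; exact h3
    · show ‖x‖ • ‖x‖⁻¹ • x = x
      rw [smul_smul, mul_inv_cancel₀ h1.ne', one_smul]

theorem slab_image {K : Set E} (h : IsBody K) {A : Set E} (hAf : A ⊆ frontier K) {u : E} (hpos : ∀ x ∈ A, 0 < ⟪x, u⟫) :
    (fun x => (⟪x, u⟫)⁻¹ • x) '' A = {y | ⟪y, u⟫ = 1 ∧ rad K y ∈ A} := by
  ext y
  constructor
  · rintro ⟨x, hx, rfl⟩
    refine ⟨?_, ?_⟩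
    · show ⟪(⟪x, u⟫)⁻¹ • x, u⟫ = 1
      rw [inner_smul_left]; simp [(hpos x hx).ne']
    · rw [h.rad_smul (inv_pos.2 (hpos x hx)), h.rad_frontier (hAf hx)]; exact hx
  · rintro ⟨h1, h2⟩
    refine ⟨_, h2, ?_⟩
    have hy : y ≠ 0 := by rintro rfl; simp at h1
    have := (h.gpos hy).ne'
    simp only [rad, inner_smul_left, h1, RCLike.conj_to_real, mul_one, inv_inv, smul_smul]
    rw [mul_inv_cancel₀ this, one_smul]

theorem slab_eq {K : Set E} (h : IsBody K) {A : Set E} (hAf : A ⊆ frontier K) {u : E} (hpos : ∀ x ∈ A, 0 < ⟪x, u⟫) :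
    slab u ((fun x => (⟪x, u⟫)⁻¹ • x) '' A) = {x | 0 < ⟪x, u⟫ ∧ ⟪x, u⟫ < 1 ∧ rad K x ∈ A} := by
  rw [slab_image h hAf hpos]
  ext x
  simp only [slab, mem_ofPred_eq]
  refine and_congr_right fun h1 => and_congr_right fun _ => ?_
  rw [h.rad_smul (inv_pos.2 h1), inner_smul_left]
  simp [h1.ne']

theorem meas_image {K : Set E} (h : IsBody K) {A : Set E} (hA : MeasurableSet A) (hAf : A ⊆ frontier K) {u : E}
    (hpos : ∀ x ∈ A, 0 < ⟪x, u⟫) :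
    MeasurableSet ((fun x => (⟪x, u⟫)⁻¹ • x) '' A) := by
  rw [slab_image h hAf hpos]
  have hc : Continuous fun x : E => ⟪x, u⟫ := by fun_prop
  exact (measurableSet_eq_fun hc.measurable measurable_const).inter (h.rad_meas hA)

theorem local_upper {K : Set E} (h : IsBody K) {m : ℕ} (hm : Module.finrank ℝ E = m + 1) {κ : ℝ≥0∞}
    (hκ : ∀ u : E, u ≠ 0 → ∀ B : Set E, MeasurableSet B →
      (∀ y ∈ B, ⟪y, u⟫ = 1) →
      ENNReal.ofReal ‖u‖ * volume (slab u B) = κ * μH[(m : ℝ)] B)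
    {A : Set E} (hA : MeasurableSet A) (hAf : A ⊆ frontier K) {u : E} (hu : u ≠ 0)
    (hpos : ∀ x ∈ A, 0 < ⟪x, u⟫) {α : ℝ} (hα : 0 < α) (hαA : ∀ x ∈ A, α * ⟪x, u⟫ ≤ ‖x‖)
    {a : ℝ} (ha : 0 ≤ a)
    (hlip : ∀ x ∈ A, ∀ y ∈ A, ‖(⟪x, u⟫)⁻¹ • x - (⟪y, u⟫)⁻¹ • y‖ ≤ a * ‖x - y‖) :
    ENNReal.ofReal (α ^ (m + 1) * ‖u‖) * theta K A ≤
      ((m + 1 : ℕ) * κ) * (ENNReal.ofReal (a ^ m) * μH[(m : ℝ)] A) := by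
  have h1 := hκ u hu _ (meas_image h hA hAf hpos) (by
    rw [slab_image h hAf hpos]; exact fun y hy => hy.1)
  have h2 : μH[(m : ℝ)] ((fun x => (⟪x, u⟫)⁻¹ • x) '' A) ≤
      ENNReal.ofReal (a ^ m) * μH[(m : ℝ)] A := by
    have hL : LipschitzOnWith a.toNNReal (fun x : E => (⟪x, u⟫)⁻¹ • x) A := by
      refine LipschitzOnWith.of_dist_le_mul fun x hx y hy => ?_
      rw [dist_eq_norm, dist_eq_norm, Real.coe_toNNReal _ ha]
      exact hlip x hx y hy
    have := hL.hausdorffMeasure_image_le (d := m) (by positivity)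
    rw [ENNReal.rpow_natCast] at this
    rwa [ENNReal.ofReal_pow ha]
  have h3 : ENNReal.ofReal (α ^ (m + 1)) * volume (coneball K A) ≤
      volume (slab u ((fun x => (⟪x, u⟫)⁻¹ • x) '' A)) := by
    rw [slab_eq h hAf hpos]
    have := Measure.addHaar_smul (volume : Measure E) α (coneball K A)
    rw [hm, abs_of_pos (by positivity)] at this
    rw [← this]
    apply measure_mono
    rintro _ ⟨x, ⟨hx1, hx2, hx3⟩, rfl⟩
    have hx0 : x ≠ 0 := norm_pos_iff.1 hx1
    have hxr : x = gauge K x • rad K x := by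
      rw [rad, smul_smul, mul_inv_cancel₀ (h.gpos hx0).ne', one_smul]
    have e1 : ⟪x, u⟫ = gauge K x * ⟪rad K x, u⟫ := by
      conv_lhs => rw [hxr, inner_smul_left]
      simp
    have e2 : ‖x‖ = gauge K x * ‖rad K x‖ := by
      conv_lhs => rw [hxr, norm_smul, Real.norm_eq_abs, abs_of_pos (h.gpos hx0)]
    have := h.gpos hx0
    have e3 := hαA _ hx3
    have e4 := hpos _ hx3
    show 0 < ⟪α • x, u⟫ ∧ ⟪α • x, u⟫ < 1 ∧ rad K (α • x) ∈ A
    rw [h.rad_smul hα, inner_smul_left, RCLike.conj_to_real, e1]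
    refine ⟨by positivity, ?_, hx3⟩
    nlinarith
  rw [theta_apply h hA, hm, ENNReal.ofReal_mul (by positivity)]
  calc _ = ((m + 1 : ℕ) : ℝ≥0∞) * (ENNReal.ofReal ‖u‖ *
        (ENNReal.ofReal (α ^ (m + 1)) * volume (coneball K A))) := by ring
    _ ≤ ((m + 1 : ℕ) : ℝ≥0∞) * (κ * (ENNReal.ofReal (a ^ m) * μH[(m : ℝ)] A)) := by
        refine mul_le_mul_right ?_ _
        exact (mul_le_mul_right h3 _).trans (h1.le.trans (mul_le_mul_right h2 _))
    _ = _ := by ring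

theorem local_lower {K : Set E} (h : IsBody K) {m : ℕ} (hm : Module.finrank ℝ E = m + 1) {κ : ℝ≥0∞}
    (hκ : ∀ u : E, u ≠ 0 → ∀ B : Set E, MeasurableSet B →
      (∀ y ∈ B, ⟪y, u⟫ = 1) →
      ENNReal.ofReal ‖u‖ * volume (slab u B) = κ * μH[(m : ℝ)] B)
    {A : Set E} (hA : MeasurableSet A) (hAf : A ⊆ frontier K) {u : E} (hu : u ≠ 0)
    (hpos : ∀ x ∈ A, 0 < ⟪x, u⟫) {β : ℝ} (hβ : 0 < β) (hβA : ∀ x ∈ A, ‖x‖ ≤ β * ⟪x, u⟫)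
    {b : ℝ} (hb : 0 ≤ b)
    (hlip : ∀ x ∈ A, ∀ y ∈ A, ‖x - y‖ ≤ b * ‖(⟪x, u⟫)⁻¹ • x - (⟪y, u⟫)⁻¹ • y‖) :
    ((m + 1 : ℕ) * κ) * μH[(m : ℝ)] A ≤
      ENNReal.ofReal (b ^ m * β ^ (m + 1) * ‖u‖) * theta K A := by
  have h1 := hκ u hu _ (meas_image h hA hAf hpos) (by
    rw [slab_image h hAf hpos]; exact fun y hy => hy.1)
  have h2 : μH[(m : ℝ)] A ≤
      ENNReal.ofReal (b ^ m) * μH[(m : ℝ)] ((fun x => (⟪x, u⟫)⁻¹ • x) '' A) := by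
    have hr : ∀ x ∈ A, rad K ((⟪x, u⟫)⁻¹ • x) = x := fun x hx => by
      rw [h.rad_smul (inv_pos.2 (hpos x hx)), h.rad_frontier (hAf hx)]
    have hL : LipschitzOnWith b.toNNReal (rad K) ((fun x => (⟪x, u⟫)⁻¹ • x) '' A) := by
      refine LipschitzOnWith.of_dist_le_mul ?_
      rintro _ ⟨x, hx, rfl⟩ _ ⟨y, hy, rfl⟩
      rw [dist_eq_norm, dist_eq_norm, Real.coe_toNNReal _ hb]
      simp only [hr x hx, hr y hy]
      exact hlip x hx y hy
    have := hL.hausdorffMeasure_image_le (d := m) (by positivity)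
    rw [ENNReal.rpow_natCast] at this
    have e : rad K '' ((fun x => (⟪x, u⟫)⁻¹ • x) '' A) = A := by
      rw [image_image]
      ext y
      constructor
      · rintro ⟨x, hx, rfl⟩
        simp only [hr x hx]; exact hx
      · intro hy
        exact ⟨y, hy, hr y hy⟩
    rw [e] at this
    rwa [ENNReal.ofReal_pow hb]
  have h3 : volume (slab u ((fun x => (⟪x, u⟫)⁻¹ • x) '' A)) ≤
      ENNReal.ofReal (β ^ (m + 1)) * volume (coneball K A) := by
    rw [slab_eq h hAf hpos]
    have := Measure.addHaar_smul (volume : Measure E) β (coneball K A)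
    rw [hm, abs_of_pos (by positivity)] at this
    rw [← this]
    apply measure_mono
    rintro x ⟨hx1, hx2, hx3⟩
    have hx0 : x ≠ 0 := by rintro rfl; simp at hx1
    have hxr : x = gauge K x • rad K x := by
      rw [rad, smul_smul, mul_inv_cancel₀ (h.gpos hx0).ne', one_smul]
    have e1 : ⟪x, u⟫ = gauge K x * ⟪rad K x, u⟫ := by
      conv_lhs => rw [hxr, inner_smul_left]
      simp
    have e2 : ‖x‖ = gauge K x * ‖rad K x‖ := by
      conv_lhs => rw [hxr, norm_smul, Real.norm_eq_abs, abs_of_pos (h.gpos hx0)]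
    have e5 := h.gpos hx0
    have e3 := hβA _ hx3
    have e6 : ‖x‖ < β := by
      rw [e2]
      calc gauge K x * ‖rad K x‖ ≤ gauge K x * (β * ⟪rad K x, u⟫) := by gcongr
        _ = β * ⟪x, u⟫ := by rw [e1]; ring
        _ < β * 1 := by gcongr
        _ = β := mul_one _
    rw [mem_smul_set_iff_inv_smul_mem₀ hβ.ne']
    have e7 : ‖β⁻¹ • x‖ = β⁻¹ * ‖x‖ := by
      rw [norm_smul, Real.norm_eq_abs, abs_of_pos (inv_pos.2 hβ)]
    have e8 : 0 < ‖x‖ := norm_pos_iff.2 hx0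
    refine ⟨by rw [e7]; positivity, ?_, ?_⟩
    · rw [e7, inv_mul_lt_iff₀ hβ, mul_one]; exact e6
    · rw [h.rad_smul (inv_pos.2 hβ)]; exact hx3
  rw [theta_apply h hA, hm, ENNReal.ofReal_mul (by positivity), ENNReal.ofReal_mul (by positivity)]
  calc ((m + 1 : ℕ) * κ) * μH[(m : ℝ)] A
      ≤ ((m + 1 : ℕ) * κ) * (ENNReal.ofReal (b ^ m) *
        μH[(m : ℝ)] ((fun x => (⟪x, u⟫)⁻¹ • x) '' A)) := by gcongr
    _ = (m + 1 : ℕ) * ENNReal.ofReal (b ^ m) *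
        (κ * μH[(m : ℝ)] ((fun x => (⟪x, u⟫)⁻¹ • x) '' A)) := by ring
    _ = (m + 1 : ℕ) * ENNReal.ofReal (b ^ m) * (ENNReal.ofReal ‖u‖ *
        volume (slab u ((fun x => (⟪x, u⟫)⁻¹ • x) '' A))) := by rw [h1]
    _ ≤ (m + 1 : ℕ) * ENNReal.ofReal (b ^ m) * (ENNReal.ofReal ‖u‖ *
        (ENNReal.ofReal (β ^ (m + 1)) * volume (coneball K A))) := by gcongr
    _ = _ := by ring

end
end GM

namespace GM
section
variable {E : Type*} [NormedAddCommGroup E] [InnerProductSpace ℝ E]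

/-- Outer unit normal selections. -/
structure IsSel [MeasurableSpace E] (K : Set E) (ν : E → E) : Prop where
  meas : Measurable ν
  unit : ∀ x, ‖ν x‖ = 1
  normal : ∀ x ∈ frontier K, ∀ y ∈ K, ⟪y, ν x⟫ ≤ ⟪x, ν x⟫

/-- Regular boundary points. -/
def Reg (K : Set E) : Set E := {x | x ∈ frontier K ∧ DifferentiableAt ℝ (gauge K) x}

theorem normal_lower {K : Set E} {r : ℝ} (hr : 0 < r) (hrK : closedBall (0 : E) r ⊆ K) {x v : E}
    (hv : ‖v‖ = 1) (hn : ∀ y ∈ K, ⟪y, v⟫ ≤ ⟪x, v⟫) : r ≤ ⟪x, v⟫ := by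
  have := hn (r • v) (hrK (by simp [norm_smul, hv, abs_of_pos hr]))
  rw [inner_smul_left, real_inner_self_eq_norm_sq, hv] at this
  simpa using this

theorem reg_deriv {K : Set E} (h : IsBody K) {x : E} (hx : x ∈ Reg K) {v : E} (hv : ‖v‖ = 1)
    (hn : ∀ y ∈ K, ⟪y, v⟫ ≤ ⟪x, v⟫) (z : E) :
    ⟪x, v⟫ * fderiv ℝ (gauge K) x z = ⟪z, v⟫ := by
  obtain ⟨r, R, hr, hR, hrK, hKR⟩ := h.exists_bounds
  have hc : 0 < ⟪x, v⟫ := hr.trans_le (normal_lower hr hrK hv hn)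
  set c := ⟪x, v⟫ with hcdef
  have hF : ∀ y, 0 ≤ c * gauge K y - ⟪y, v⟫ := by
    intro y
    by_cases hy : y = 0
    · simp [hy]
    · have h1 := hn (rad K y) (h.frontier_sub (h.rad_mem hy))
      rw [rad, inner_smul_left, RCLike.conj_to_real, inv_mul_le_iff₀ (h.gpos hy)] at h1
      linarith
  have hmin : IsLocalMin (fun y => c * gauge K y - ⟪y, v⟫) x := by
    apply Filter.Eventually.of_forall
    intro y
    have : c * gauge K x - ⟪x, v⟫ = 0 := by
      rw [h.frontier_iff.1 hx.1, mul_one]; simp [hcdef]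
    simp only [this]
    exact hF y
  have hd : HasFDerivAt (fun y => c * gauge K y - ⟪y, v⟫)
      (c • fderiv ℝ (gauge K) x - innerSL ℝ v) x := by
    have h2 : HasFDerivAt (fun y => ⟪y, v⟫) (innerSL ℝ v) x := by
      have := (innerSL ℝ v).hasFDerivAt (x := x)
      refine this.congr_of_eventuallyEq (Filter.Eventually.of_forall fun y => ?_)
      simp [real_inner_comm]
    exact (hx.2.hasFDerivAt.const_mul c).sub h2
  have h0 := hmin.hasFDerivAt_eq_zero hd
  have := congrArg (fun L => L z) h0
  simp only [ContinuousLinearMap.sub_apply, ContinuousLinearMap.smul_apply, innerSL_apply_apply,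
    smul_eq_mul, ContinuousLinearMap.zero_apply] at this
  rw [real_inner_comm] 
  linarith

theorem reg_unique {K : Set E} (h : IsBody K) {x : E} (hx : x ∈ Reg K) {v w : E} (hv : ‖v‖ = 1)
    (hw : ‖w‖ = 1) (hnv : ∀ y ∈ K, ⟪y, v⟫ ≤ ⟪x, v⟫) (hnw : ∀ y ∈ K, ⟪y, w⟫ ≤ ⟪x, w⟫) : v = w := by
  obtain ⟨r, R, hr, hR, hrK, hKR⟩ := h.exists_bounds
  have hc : 0 < ⟪x, v⟫ := hr.trans_le (normal_lower hr hrK hv hnv)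
  have hd : 0 < ⟪x, w⟫ := hr.trans_le (normal_lower hr hrK hw hnw)
  have h1 : ⟪x, w⟫ • v = ⟪x, v⟫ • w := by
    refine ext_inner_left ℝ fun z => ?_
    have a := reg_deriv h hx hv hnv z
    have b := reg_deriv h hx hw hnw z
    rw [inner_smul_right, inner_smul_right]
    linear_combination ⟪x, v⟫ * b - ⟪x, w⟫ * a
  have h2 := congrArg norm h1
  rw [norm_smul, norm_smul, hv, hw, Real.norm_eq_abs, Real.norm_eq_abs, abs_of_pos hc,
    abs_of_pos hd, mul_one, mul_one] at h2
  rw [h2] at h1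
  exact smul_right_injective E hc.ne' h1

variable [FiniteDimensional ℝ E] [MeasurableSpace E] [BorelSpace E]

theorem reg_cont {K : Set E} (h : IsBody K) {ν : E → E} (hν : IsSel K ν) {x : E} (hx : x ∈ Reg K) :
    Tendsto ν (𝓝[frontier K] x) (𝓝 (ν x)) := by
  refine (isCompact_sphere (0 : E) 1).tendsto_nhds_of_unique_mapClusterPt
    (Eventually.of_forall fun y => by simp [hν.unit]) ?_
  intro v hv hcl
  have hv1 : ‖v‖ = 1 := by simpa using hv
  refine reg_unique h hx hv1 (hν.unit x) ?_ (hν.normal x hx.1)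
  intro y hy
  obtain ⟨U, hU, hUv⟩ := mapClusterPt_iff_ultrafilter.1 hcl
  have hUx : Tendsto id (U : Filter E) (𝓝 x) := hU.trans nhdsWithin_le_nhds
  have hUf : ∀ᶠ z in (U : Filter E), z ∈ frontier K := hU self_mem_nhdsWithin
  refine le_of_tendsto_of_tendsto ((tendsto_const_nhds (x := y)).inner hUv) (hUx.inner hUv) ?_
  filter_upwards [hUf] with z hz
  exact hν.normal z hz y hy

theorem meas_Reg {K : Set E} : MeasurableSet (Reg K) :=
  isClosed_frontier.measurableSet.inter (measurableSet_of_differentiableAt ℝ (gauge K))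

theorem theta_frontier {K : Set E} (h : IsBody K) : theta K (frontier K)ᶜ = 0 := by
  rw [theta_apply h isClosed_frontier.measurableSet.compl]
  have : coneball K (frontier K)ᶜ = ∅ := by
    ext x
    simp only [mem_empty_iff_false, iff_false]
    rintro ⟨h1, -, h3⟩
    exact h3 (h.rad_mem (norm_pos_iff.1 h1))
  simp [this]

theorem theta_reg {K : Set E} (h : IsBody K) : theta K (Reg K)ᶜ = 0 := by
  rw [theta_apply h meas_Reg.compl]
  obtain ⟨C, hC⟩ := h.convex.lipschitz_gauge h.nhds
  have h1 := hC.ae_differentiableAt (μ := (volume : Measure E))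
  have : volume (coneball K (Reg K)ᶜ) = 0 := by
    refine measure_mono_null ?_ h1
    rintro x ⟨hx1, -, hx3⟩ hd
    have hx0 : x ≠ 0 := norm_pos_iff.1 hx1
    have hg := h.gpos hx0
    refine hx3 ⟨h.rad_mem hx0, ?_⟩
    have e : gauge K = fun y => (gauge K x)⁻¹ * gauge K (gauge K x • y) := by
      funext y
      rw [h.gsmul hg.le, ← mul_assoc, inv_mul_cancel₀ hg.ne', one_mul]
    rw [e]
    refine DifferentiableAt.const_mul ?_ _
    refine DifferentiableAt.comp (g := gauge K) (f := fun y => gauge K x • y) _ ?_ (by fun_prop)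
    have : gauge K x • rad K x = x := by
      rw [rad, smul_smul, mul_inv_cancel₀ hg.ne', one_smul]
    rw [this]; exact hd
  rw [this, mul_zero]

theorem inv_smul_sub_le {s t : ℝ} {x y : E} (hs : 0 < s) (ht : 0 < t) :
    ‖s⁻¹ • x - t⁻¹ • y‖ ≤ s⁻¹ * ‖x - y‖ + (s⁻¹ * t⁻¹ * ‖y‖) * |t - s| := by
  have : s⁻¹ • x - t⁻¹ • y = s⁻¹ • (x - y) + ((s⁻¹ * t⁻¹) * (t - s)) • y := by
    rw [smul_sub]
    have : (s⁻¹ * t⁻¹) * (t - s) = s⁻¹ - t⁻¹ := by field_simp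
    rw [this, sub_smul]; abel
  rw [this]
  refine (norm_add_le _ _).trans ?_
  rw [norm_smul, norm_smul, Real.norm_eq_abs, Real.norm_eq_abs, abs_mul, abs_of_pos (by positivity),
    abs_of_pos (by positivity)]
  apply le_of_eq; ring

theorem sigma_null {K : Set E} (h : IsBody K) {m : ℕ} (hm : Module.finrank ℝ E = m + 1)
    {A : Set E} (hA : MeasurableSet A) (hAf : A ⊆ frontier K) (hθ : theta K A = 0) :
    μH[(m : ℝ)] A = 0 := by
  obtain ⟨κ, hκ0, hκt, hκ⟩ := slab_main (E := E) m hm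
  obtain ⟨r, R, hr, hR, hrK, hKR⟩ := h.exists_bounds
  obtain ⟨C, hC0, hC⟩ := h.gauge_lip
  apply measure_null_of_locally_null
  intro x0 hx0
  have hx00 : x0 ≠ 0 := h.frontier_ne (hAf hx0)
  have hc : Continuous fun x : E => ⟪x, x0⟫ := by fun_prop
  set u := x0 with hu
  have hx0p : 0 < ⟪x0, u⟫ := by
    rw [real_inner_self_eq_norm_sq]; have := norm_pos_iff.2 hx00; positivity
  set q := ⟪x0, u⟫ / 2 with hq
  have hqp : 0 < q := by positivity
  set U : Set E := {x | q < ⟪x, u⟫} with hU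
  have hUo : IsOpen U := isOpen_lt continuous_const hc
  refine ⟨A ∩ U, inter_mem_nhdsWithin _ (hUo.mem_nhds (by show q < _; rw [hq]; linarith)), ?_⟩
  have hAn : ∀ x ∈ A, ‖x‖ ≤ R := fun x hx => by
    simpa using hKR (h.frontier_sub (hAf hx))
  have hN : 0 < ‖u‖ := norm_pos_iff.2 hx00
  have key := local_lower h hm hκ (A := A ∩ U) (hA.inter hUo.measurableSet)
    (inter_subset_left.trans hAf) hx00 (fun x hx => hqp.trans hx.2)
    (β := R / q) (by positivity) (fun x hx => by
      have h1 := hAn x hx.1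
      have h2 : q < ⟪x, u⟫ := hx.2
      calc ‖x‖ ≤ R := h1
        _ = R / q * q := by field_simp
        _ ≤ _ := by gcongr)
    (b := (R * ‖u‖) + (R * ‖u‖) * (R * ‖u‖) * (R / q) * C) (by positivity) (by
      intro x hx y hy
      have px : 0 < ⟪x, u⟫ := hqp.trans hx.2
      have py : 0 < ⟪y, u⟫ := hqp.trans hy.2
      have gx : gauge K ((⟪x, u⟫)⁻¹ • x) = (⟪x, u⟫)⁻¹ := by
        rw [h.gsmul (inv_nonneg.2 px.le), h.frontier_iff.1 (hAf hx.1), mul_one]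
      have gy : gauge K ((⟪y, u⟫)⁻¹ • y) = (⟪y, u⟫)⁻¹ := by
        rw [h.gsmul (inv_nonneg.2 py.le), h.frontier_iff.1 (hAf hy.1), mul_one]
      have bx : ⟪x, u⟫ ≤ R * ‖u‖ := (real_inner_le_norm _ _).trans (by gcongr; exact hAn x hx.1)
      have bY : ⟪y, u⟫ ≤ R * ‖u‖ := (real_inner_le_norm _ _).trans (by gcongr; exact hAn y hy.1)
      have hL := hC ((⟪y, u⟫)⁻¹ • y) ((⟪x, u⟫)⁻¹ • x)
      rw [gx, gy, norm_sub_rev] at hL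
      have h1 := inv_smul_sub_le (x := (⟪x, u⟫)⁻¹ • x) (y := (⟪y, u⟫)⁻¹ • y)
        (inv_pos.2 px) (inv_pos.2 py)
      rw [inv_inv, inv_inv, smul_smul, smul_smul, mul_inv_cancel₀ px.ne', mul_inv_cancel₀ py.ne',
        one_smul, one_smul] at h1
      have hny : ‖(⟪y, u⟫)⁻¹ • y‖ ≤ R / q := by
        rw [norm_smul, norm_inv, Real.norm_eq_abs, abs_of_pos py, ← div_eq_inv_mul]
        exact div_le_div₀ hR.le (hAn y hy.1) hqp (le_of_lt hy.2)
      refine h1.trans ?_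
      rw [add_mul]
      refine add_le_add (mul_le_mul_of_nonneg_right bx (norm_nonneg _)) ?_
      have hyn := norm_nonneg ((⟪y, u⟫)⁻¹ • y)
      have k1 : ⟪x, u⟫ * ⟪y, u⟫ ≤ (R * ‖u‖) * (R * ‖u‖) :=
        mul_le_mul bx bY py.le (by positivity)
      have k2 : ⟪x, u⟫ * ⟪y, u⟫ * ‖(⟪y, u⟫)⁻¹ • y‖ ≤ (R * ‖u‖) * (R * ‖u‖) * (R / q) :=
        mul_le_mul k1 hny hyn (by positivity)
      have k3 := mul_le_mul k2 hL (abs_nonneg _) (by positivity)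
      exact k3.trans_eq (by ring))
  have hz : theta K (A ∩ U) = 0 := measure_mono_null inter_subset_left hθ
  rw [hz, mul_zero] at key
  have := nonpos_iff_eq_zero.1 key
  rcases mul_eq_zero.1 this with h1 | h1
  · rcases mul_eq_zero.1 h1 with h2 | h2
    · simp at h2
    · exact absurd h2 hκ0
  · exact h1

theorem glue {X : Type*} [TopologicalSpace X] [SecondCountableTopology X] [MeasurableSpace X]
    [BorelSpace X] {M₁ M₂ : Measure X} {R : Set X} (hR : M₁ Rᶜ = 0) {c : ℝ≥0∞}
    (hloc : ∀ x ∈ R, ∃ U, IsOpen U ∧ x ∈ U ∧ ∀ A, MeasurableSet A → A ⊆ U → M₁ A ≤ c * M₂ A)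
    {A : Set X} (hA : MeasurableSet A) : M₁ A ≤ c * M₂ A := by
  choose! U hUo hxU hU using hloc
  obtain ⟨t, htR, htc, htU⟩ := TopologicalSpace.countable_cover_nhdsWithin (s := R) (f := U)
    (fun x hx => mem_nhdsWithin_of_mem_nhds ((hUo x hx).mem_nhds (hxU x hx)))
  rcases t.eq_empty_or_nonempty with rfl | hne
  · have hRe : R = ∅ := by simpa using htU
    have : M₁ A = 0 := measure_mono_null (by simp [hRe]) hR
    simp [this]
  · obtain ⟨f, rfl⟩ := htc.exists_eq_range hne
    have hfR : ∀ i, f i ∈ R := fun i => htR (mem_range_self i)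
    let V : ℕ → Set X := fun i => U (f i)
    have hV : R ⊆ ⋃ i, V i := by simpa [V] using htU
    have hVm : ∀ i, MeasurableSet (V i) := fun i => (hUo _ (hfR i)).measurableSet
    have hDm : ∀ i, MeasurableSet (disjointed V i) := fun i => MeasurableSet.disjointed hVm i
    have hmeas : ∀ i, MeasurableSet (A ∩ disjointed V i) := fun i => hA.inter (hDm i)
    have hdis : Pairwise (Function.onFun Disjoint fun i => A ∩ disjointed V i) := by
      intro i j hij
      exact (disjoint_disjointed V hij).mono inter_subset_right inter_subset_right
    calc M₁ A ≤ M₁ ((⋃ i, A ∩ disjointed V i) ∪ Rᶜ) := by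
          apply measure_mono
          intro x hx
          by_cases hxR : x ∈ R
          · left
            rw [← inter_iUnion, iUnion_disjointed]
            exact ⟨hx, hV hxR⟩
          · exact Or.inr hxR
      _ ≤ M₁ (⋃ i, A ∩ disjointed V i) + M₁ Rᶜ := measure_union_le _ _
      _ = ∑' i, M₁ (A ∩ disjointed V i) := by rw [hR, add_zero, measure_iUnion hdis hmeas]
      _ ≤ ∑' i, c * M₂ (A ∩ disjointed V i) := by
          refine ENNReal.tsum_le_tsum fun i => hU _ (hfR i) _ (hmeas i) ?_
          exact inter_subset_right.trans (disjointed_subset V i)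
      _ = c * M₂ (⋃ i, A ∩ disjointed V i) := by
          rw [ENNReal.tsum_mul_left, measure_iUnion hdis hmeas]
      _ ≤ c * M₂ A := by
          gcongr
          exact iUnion_subset fun i => inter_subset_left

end
end GM

namespace GM
section
variable {E : Type*} [NormedAddCommGroup E] [InnerProductSpace ℝ E]

theorem proj_lip {x y u : E} {c ε δ R : ℝ} (hc : 1 < c) (hδ : δ = 1 - c⁻¹) (hR : 0 < R)
    (hε : ε = δ / (8 * R))
    (hx : 0 < ⟪x, u⟫) (hy : 0 < ⟪y, u⟫) (hx1 : |(⟪x, u⟫)⁻¹ - 1| ≤ δ / 2) (hx2 : (⟪x, u⟫)⁻¹ ≤ 2)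
    (hy2 : (⟪y, u⟫)⁻¹ ≤ 2) (hyR : ‖y‖ ≤ R) (hxy : |⟪x - y, u⟫| ≤ ε * ‖x - y‖) :
    ‖(⟪x, u⟫)⁻¹ • x - (⟪y, u⟫)⁻¹ • y‖ ≤ c * ‖x - y‖ ∧
    ‖x - y‖ ≤ c * ‖(⟪x, u⟫)⁻¹ • x - (⟪y, u⟫)⁻¹ • y‖ := by
  have hc0 : 0 < c := by linarith
  have hci : c⁻¹ < 1 := inv_lt_one_of_one_lt₀ hc
  have hδ0 : 0 < δ := by linarith
  set s := ⟪x, u⟫ with hs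
  set t := ⟪y, u⟫ with ht
  have e : (s⁻¹ • x - t⁻¹ • y) - (x - y) = (s⁻¹ - 1) • (x - y) + ((s⁻¹ * t⁻¹) * (t - s)) • y := by
    have : (s⁻¹ * t⁻¹) * (t - s) = s⁻¹ - t⁻¹ := by field_simp
    rw [this]
    module
  have hst : |t - s| ≤ ε * ‖x - y‖ := by
    rw [abs_sub_comm, hs, ht, ← inner_sub_left]; exact hxy
  have key : ‖(s⁻¹ • x - t⁻¹ • y) - (x - y)‖ ≤ δ * ‖x - y‖ := by
    rw [e]
    refine (norm_add_le _ _).trans ?_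
    rw [norm_smul, norm_smul, Real.norm_eq_abs, Real.norm_eq_abs, abs_mul, abs_of_pos (by positivity : 0 < s⁻¹ * t⁻¹)]
    have k1 : |s⁻¹ - 1| * ‖x - y‖ ≤ δ / 2 * ‖x - y‖ := mul_le_mul_of_nonneg_right hx1 (norm_nonneg _)
    have k2 : s⁻¹ * t⁻¹ ≤ 2 * 2 := mul_le_mul hx2 hy2 (by positivity) (by norm_num)
    have k3 := mul_le_mul (mul_le_mul k2 hst (abs_nonneg _) (by norm_num)) hyR (norm_nonneg _)
      (by rw [hε]; positivity)
    have k4 : 2 * 2 * (ε * ‖x - y‖) * R = δ / 2 * ‖x - y‖ := by rw [hε]; field_simp; norm_num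
    linarith
  have hcc : c * c⁻¹ = 1 := mul_inv_cancel₀ hc0.ne'
  have hN := norm_nonneg (x - y)
  constructor
  · have h1 : ‖s⁻¹ • x - t⁻¹ • y‖ ≤ ‖(s⁻¹ • x - t⁻¹ • y) - (x - y)‖ + ‖x - y‖ := by
      simpa using norm_add_le ((s⁻¹ • x - t⁻¹ • y) - (x - y)) (x - y)
    have h2 : δ + 1 ≤ c := by
      rw [hδ]
      have : 0 < c⁻¹ := by positivity
      nlinarith
    nlinarith
  · have h1 : ‖x - y‖ ≤ ‖(s⁻¹ • x - t⁻¹ • y) - (x - y)‖ + ‖s⁻¹ • x - t⁻¹ • y‖ := by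
      have := norm_sub_le (s⁻¹ • x - t⁻¹ • y) ((s⁻¹ • x - t⁻¹ • y) - (x - y))
      rw [sub_sub_cancel] at this
      linarith
    have h2 : c⁻¹ * ‖x - y‖ ≤ ‖s⁻¹ • x - t⁻¹ • y‖ := by
      rw [hδ] at key; nlinarith
    rwa [inv_mul_le_iff₀ hc0] at h2

variable [FiniteDimensional ℝ E] [MeasurableSpace E] [BorelSpace E]

/-- density of the radial measure with respect to surface measure -/
noncomputable def dens (m : ℕ) (ν : E → E) (x : E) : ℝ := ⟪x, ν x⟫ * (‖x‖ ^ (m + 1))⁻¹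

theorem local_geom {K : Set E} (h : IsBody K) {ν : E → E} (hν : IsSel K ν) (m : ℕ) {x0 : E}
    (hx0 : x0 ∈ Reg K) {c : ℝ} (hc : 1 < c) :
    ∃ U : Set E, IsOpen U ∧ x0 ∈ U ∧ 
      (∀ x ∈ U ∩ frontier K, 0 < ⟪x, (⟪x0, ν x0⟫)⁻¹ • ν x0⟫ ∧
        ‖x0‖ / c * ⟪x, (⟪x0, ν x0⟫)⁻¹ • ν x0⟫ ≤ ‖x‖ ∧
        ‖x‖ ≤ c * ‖x0‖ * ⟪x, (⟪x0, ν x0⟫)⁻¹ • ν x0⟫ ∧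
        dens m ν x0 / c ≤ dens m ν x ∧ dens m ν x ≤ c * dens m ν x0) ∧
      (∀ x ∈ U ∩ frontier K, ∀ y ∈ U ∩ frontier K,
        ‖(⟪x, (⟪x0, ν x0⟫)⁻¹ • ν x0⟫)⁻¹ • x - (⟪y, (⟪x0, ν x0⟫)⁻¹ • ν x0⟫)⁻¹ • y‖ ≤ c * ‖x - y‖ ∧
        ‖x - y‖ ≤ c * ‖(⟪x, (⟪x0, ν x0⟫)⁻¹ • ν x0⟫)⁻¹ • x - (⟪y, (⟪x0, ν x0⟫)⁻¹ • ν x0⟫)⁻¹ • y‖) := by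
  obtain ⟨r, R, hr, hR, hrK, hKR⟩ := h.exists_bounds
  have hh0 : 0 < ⟪x0, ν x0⟫ := hr.trans_le (normal_lower hr hrK (hν.unit _) (hν.normal _ hx0.1))
  have hn0 : 0 < ‖x0‖ := norm_pos_iff.2 (h.frontier_ne hx0.1)
  set h0 := ⟪x0, ν x0⟫ with hh0def
  set u := h0⁻¹ • ν x0 with hu
  have hux : ⟪x0, u⟫ = 1 := by
    rw [hu, inner_smul_right, ← hh0def, inv_mul_cancel₀ hh0.ne']
  have hc0 : 0 < c := by linarith
  have hci : c⁻¹ < 1 := inv_lt_one_of_one_lt₀ hc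
  set δ := 1 - c⁻¹ with hδ
  have hδ0 : 0 < δ := by linarith
  set ε := δ / (8 * R) with hε
  have hε0 : 0 < ε := by positivity
  have tid : Tendsto (fun x : E => x) (𝓝[frontier K] x0) (𝓝 x0) := tendsto_id.mono_left nhdsWithin_le_nhds
  have tν := reg_cont h hν hx0
  have tin : Tendsto (fun x : E => ⟪x, u⟫) (𝓝[frontier K] x0) (𝓝 1) := by
    rw [← hux]; exact tid.inner tendsto_const_nhds
  have tn : Tendsto (fun x : E => ‖x‖) (𝓝[frontier K] x0) (𝓝 ‖x0‖) := tid.norm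
  have tini : Tendsto (fun x : E => (⟪x, u⟫)⁻¹) (𝓝[frontier K] x0) (𝓝 1) := by
    simpa using tin.inv₀ one_ne_zero
  have td : Tendsto (dens m ν) (𝓝[frontier K] x0) (𝓝 (dens m ν x0)) :=
    (tid.inner tν).mul ((tn.pow (m + 1)).inv₀ (by positivity))
  have hd0 : 0 < dens m ν x0 := by unfold dens; positivity
  have e1 : ∀ᶠ x in 𝓝[frontier K] x0, 0 < ⟪x, u⟫ := tin.eventually_const_lt one_pos
  have e2 : ∀ᶠ x in 𝓝[frontier K] x0, ‖x0‖ / c * ⟪x, u⟫ < ‖x‖ := by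
    refine (tin.const_mul (‖x0‖ / c)).eventually_lt tn ?_
    rw [mul_one]; exact div_lt_self hn0 hc
  have e3 : ∀ᶠ x in 𝓝[frontier K] x0, ‖x‖ < c * ‖x0‖ * ⟪x, u⟫ := by
    refine tn.eventually_lt (tin.const_mul (c * ‖x0‖)) ?_
    rw [mul_one]; exact lt_mul_of_one_lt_left hn0 hc
  have e4 : ∀ᶠ x in 𝓝[frontier K] x0, dens m ν x0 / c < dens m ν x := 
    td.eventually_const_lt (div_lt_self hd0 hc)
  have e5 : ∀ᶠ x in 𝓝[frontier K] x0, dens m ν x < c * dens m ν x0 := 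
    td.eventually_lt_const (lt_mul_of_one_lt_left hd0 hc)
  have e6 : ∀ᶠ x in 𝓝[frontier K] x0, |(⟪x, u⟫)⁻¹ - 1| < δ / 2 := by
    refine (tini.sub_const 1).abs.eventually_lt_const ?_
    simp; positivity
  have e7 : ∀ᶠ x in 𝓝[frontier K] x0, (⟪x, u⟫)⁻¹ < 2 := tini.eventually_lt_const one_lt_two
  have e8 : ∀ᶠ x in 𝓝[frontier K] x0, ‖ν x - ν x0‖ < ε * h0 := by
    refine (tν.sub_const (ν x0)).norm.eventually_lt_const ?_
    simp; positivity
  obtain ⟨U, hUo, hxU, hU⟩ := mem_nhdsWithin.1 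
    (e1.and (e2.and (e3.and (e4.and (e5.and (e6.and (e7.and e8)))))))
  refine ⟨U, hUo, hxU, ?_, ?_⟩
  · intro x hx
    obtain ⟨a1, a2, a3, a4, a5, a6, a7, a8⟩ := hU hx
    exact ⟨a1, a2.le, a3.le, a4.le, a5.le⟩
  · intro x hx y hy
    obtain ⟨a1, a2, a3, a4, a5, a6, a7, a8⟩ := hU hx
    obtain ⟨b1, b2, b3, b4, b5, b6, b7, b8⟩ := hU hy
    have hyK := h.frontier_sub hy.2
    have hxK := h.frontier_sub hx.2
    refine proj_lip hc hδ hR hε a1 b1 a6.le a7.le b7.le (by simpa using hKR hyK) ?_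
    have k1 : 0 ≤ ⟪x - y, ν x⟫ := by
      rw [inner_sub_left]; linarith [hν.normal x hx.2 y hyK]
    have k2 : ⟪x - y, ν y⟫ ≤ 0 := by
      rw [inner_sub_left]; linarith [hν.normal y hy.2 x hxK]
    have k3 : ⟪x - y, ν x⟫ = ⟪x - y, ν x0⟫ + ⟪x - y, ν x - ν x0⟫ := by
      rw [← inner_add_right]; congr 1; abel
    have k4 : ⟪x - y, ν y⟫ = ⟪x - y, ν x0⟫ + ⟪x - y, ν y - ν x0⟫ := by
      rw [← inner_add_right]; congr 1; abel
    have k5 := (abs_le.1 (abs_real_inner_le_norm (x - y) (ν x - ν x0))).2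
    have k6 := (abs_le.1 (abs_real_inner_le_norm (x - y) (ν y - ν x0))).1
    have k7 := mul_le_mul_of_nonneg_left a8.le (norm_nonneg (x - y))
    have k8 := mul_le_mul_of_nonneg_left b8.le (norm_nonneg (x - y))
    have k9 : |⟪x - y, ν x0⟫| ≤ ‖x - y‖ * (ε * h0) := by
      rw [abs_le]; constructor <;> linarith
    rw [hu, inner_smul_right, abs_mul, abs_of_pos (inv_pos.2 hh0), inv_mul_le_iff₀ hh0]
    linarith

theorem dens_meas {K : Set E} {ν : E → E} (hν : IsSel K ν) (m : ℕ) : Measurable (dens m ν) := 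
  (measurable_id.inner hν.meas).mul (measurable_norm.pow_const (m + 1)).inv

/-- radial measure with density -/
noncomputable def surf (m : ℕ) (κ : ℝ≥0∞) (K : Set E) (ν : E → E) : Measure E :=
  (μH[(m : ℝ)].restrict (frontier K)).withDensity
    fun x => ((m + 1 : ℕ) * κ) * ENNReal.ofReal (dens m ν x)

theorem theta_eq {K : Set E} (h : IsBody K) {ν : E → E} (hν : IsSel K ν) {m : ℕ}
    (hm : Module.finrank ℝ E = m + 1) {κ : ℝ≥0∞} 
    (hκ : ∀ u : E, u ≠ 0 → ∀ B : Set E, MeasurableSet B →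
      (∀ y ∈ B, ⟪y, u⟫ = 1) →
      ENNReal.ofReal ‖u‖ * volume (slab u B) = κ * μH[(m : ℝ)] B) :
    theta K = surf m κ K ν := by
  have hfm : MeasurableSet (frontier K) := isClosed_frontier.measurableSet
  have hreg : μH[(m : ℝ)] (frontier K \ Reg K) = 0 := by
    refine sigma_null h hm (hfm.diff meas_Reg) sdiff_subset ?_
    exact measure_mono_null (fun x hx => hx.2) (theta_reg h)
  have hsreg : surf m κ K ν (Reg K)ᶜ = 0 := by
    refine withDensity_absolutelyContinuous _ _ ?_
    rw [Measure.restrict_apply meas_Reg.compl, inter_comm]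
    exact hreg
  have hsA : ∀ A, MeasurableSet A → A ⊆ frontier K → surf m κ K ν A =
      ∫⁻ x in A, ((m + 1 : ℕ) * κ) * ENNReal.ofReal (dens m ν x) ∂μH[(m : ℝ)] := by
    intro A hA hAf
    rw [surf, withDensity_apply _ hA, Measure.restrict_restrict hA, inter_eq_left.2 hAf]
  set κ' : ℝ≥0∞ := (m + 1 : ℕ) * κ with hκ'
  -- comparison
  have comp : ∀ c : ℝ, 1 < c → ∀ A, MeasurableSet A → 
      theta K A ≤ ENNReal.ofReal (c ^ (2 * m + 2)) * surf m κ K ν A ∧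
      surf m κ K ν A ≤ ENNReal.ofReal (c ^ (2 * m + 2)) * theta K A := by
    intro c hc A hA
    have hc0 : 0 < c := by linarith
    have main : ∀ x0 ∈ Reg K, ∃ U, IsOpen U ∧ x0 ∈ U ∧ ∀ A, MeasurableSet A → A ⊆ U → 
        theta K A ≤ ENNReal.ofReal (c ^ (2 * m + 2)) * surf m κ K ν A ∧
        surf m κ K ν A ≤ ENNReal.ofReal (c ^ (2 * m + 2)) * theta K A := by
      intro x0 hx0
      obtain ⟨r, R, hr, hR, hrK, hKR⟩ := h.exists_bounds
      have hh0 : 0 < ⟪x0, ν x0⟫ := hr.trans_le (normal_lower hr hrK (hν.unit _) (hν.normal _ hx0.1))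
      have hn0 : 0 < ‖x0‖ := norm_pos_iff.2 (h.frontier_ne hx0.1)
      obtain ⟨U, hUo, hxU, hU1, hU2⟩ := local_geom h hν m hx0 hc
      refine ⟨U, hUo, hxU, fun A hA hAU => ?_⟩
      have hBm : MeasurableSet (A ∩ frontier K) := hA.inter hfm
      have t1 : theta K A = theta K (A ∩ frontier K) := by
        refine (measure_inter_conull ?_).symm
        exact theta_frontier h
      have t2 : surf m κ K ν A = surf m κ K ν (A ∩ frontier K) := by
        refine (measure_inter_conull ?_).symm
        exact measure_mono_null (compl_subset_compl.2 (fun x hx => hx.1)) hsreg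
      rw [t1, t2]
      have hBU : ∀ x ∈ A ∩ frontier K, x ∈ U ∩ frontier K := fun x hx => ⟨hAU hx.1, hx.2⟩
      have hBf : A ∩ frontier K ⊆ frontier K := inter_subset_right
      clear t1 t2 hAU
      generalize A ∩ frontier K = B at *
      have hu : (⟪x0, ν x0⟫)⁻¹ • ν x0 ≠ 0 := by
        refine smul_ne_zero (inv_pos.2 hh0).ne' ?_
        intro h0; have := hν.unit x0; simp [h0] at this
      have hun : ‖(⟪x0, ν x0⟫)⁻¹ • ν x0‖ = (⟪x0, ν x0⟫)⁻¹ := by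
        rw [norm_smul, hν.unit, mul_one, Real.norm_eq_abs, abs_of_pos (inv_pos.2 hh0)]
      have up := local_upper h hm hκ hBm hBf hu (fun x hx => (hU1 x (hBU x hx)).1)
        (α := ‖x0‖ / c) (by positivity) (fun x hx => (hU1 x (hBU x hx)).2.1) hc0.le
        (fun x hx y hy => (hU2 x (hBU x hx) y (hBU y hy)).1)
      have lo := local_lower h hm hκ hBm hBf hu (fun x hx => (hU1 x (hBU x hx)).1)
        (β := c * ‖x0‖) (by positivity) (fun x hx => (hU1 x (hBU x hx)).2.2.1) hc0.le
        (fun x hx y hy => (hU2 x (hBU x hx) y (hBU y hy)).2)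
      rw [hun, ← hκ'] at up lo
      have hd0 : 0 < dens m ν x0 := by unfold dens; positivity
      have lb : κ' * ENNReal.ofReal (dens m ν x0 / c) * μH[(m : ℝ)] B ≤ surf m κ K ν B := by
        rw [hsA B hBm hBf, ← setLIntegral_const]
        refine setLIntegral_mono' hBm fun x hx => ?_
        exact mul_le_mul_right (ENNReal.ofReal_le_ofReal (hU1 x (hBU x hx)).2.2.2.1) _
      have ub : surf m κ K ν B ≤ κ' * ENNReal.ofReal (c * dens m ν x0) * μH[(m : ℝ)] B := by
        rw [hsA B hBm hBf, ← setLIntegral_const]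
        refine setLIntegral_mono' hBm fun x hx => ?_
        exact mul_le_mul_right (ENNReal.ofReal_le_ofReal (hU1 x (hBU x hx)).2.2.2.2) _
      set P := (‖x0‖ / c) ^ (m + 1) * (⟪x0, ν x0⟫)⁻¹ with hP
      have hP0 : 0 < P := by positivity
      have pd : P⁻¹ * c ^ m = c ^ (2 * m + 2) * (dens m ν x0 / c) := by
        rw [hP, dens, div_pow]; field_simp; ring
      have pd2 : c * dens m ν x0 * (c ^ m * (c * ‖x0‖) ^ (m + 1) * (⟪x0, ν x0⟫)⁻¹) = c ^ (2 * m + 2) := by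
        rw [dens, mul_pow]; field_simp; ring
      constructor
      · calc theta K B = ENNReal.ofReal P⁻¹ * (ENNReal.ofReal P * theta K B) := by
              rw [← mul_assoc, ← ENNReal.ofReal_mul (by positivity), inv_mul_cancel₀ hP0.ne',
                ENNReal.ofReal_one, one_mul]
          _ ≤ ENNReal.ofReal P⁻¹ * (κ' * (ENNReal.ofReal (c ^ m) * μH[(m : ℝ)] B)) :=
              mul_le_mul_right up _
          _ = κ' * ENNReal.ofReal (P⁻¹ * c ^ m) * μH[(m : ℝ)] B := by
              rw [ENNReal.ofReal_mul (by positivity)]; ring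
          _ = ENNReal.ofReal (c ^ (2 * m + 2)) *
              (κ' * ENNReal.ofReal (dens m ν x0 / c) * μH[(m : ℝ)] B) := by
              rw [pd, ENNReal.ofReal_mul (by positivity)]; ring
          _ ≤ _ := mul_le_mul_right lb _
      · calc surf m κ K ν B ≤ κ' * ENNReal.ofReal (c * dens m ν x0) * μH[(m : ℝ)] B := ub
          _ = ENNReal.ofReal (c * dens m ν x0) * (κ' * μH[(m : ℝ)] B) := by ring
          _ ≤ _ := mul_le_mul_right lo _
          _ = _ := by rw [← mul_assoc, ← ENNReal.ofReal_mul (by positivity), pd2]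
    constructor
    · exact glue (theta_reg h) (fun x hx => (main x hx).imp fun U hU => 
        ⟨hU.1, hU.2.1, fun A hA hAU => (hU.2.2 A hA hAU).1⟩) hA
    · exact glue hsreg (fun x hx => (main x hx).imp fun U hU => 
        ⟨hU.1, hU.2.1, fun A hA hAU => (hU.2.2 A hA hAU).2⟩) hA
  have lim : ∀ a b : ℝ≥0∞, (∀ c : ℝ, 1 < c → a ≤ ENNReal.ofReal (c ^ (2 * m + 2)) * b) → a ≤ b := by
    intro a b hab
    have t : Tendsto (fun c : ℝ => ENNReal.ofReal (c ^ (2 * m + 2)) * b) (𝓝[>] 1) (𝓝 (1 * b)) := by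
      refine ENNReal.Tendsto.mul_const ?_ (Or.inl one_ne_zero)
      have : Tendsto (fun c : ℝ => c ^ (2 * m + 2)) (𝓝[>] 1) (𝓝 (1 ^ (2 * m + 2))) :=
        ((continuous_pow (2 * m + 2)).tendsto 1).mono_left nhdsWithin_le_nhds
      rw [one_pow] at this
      simpa using ENNReal.tendsto_ofReal this
    rw [one_mul] at t
    exact ge_of_tendsto t (eventually_mem_nhdsWithin.mono fun c hc => hab c hc)
  ext A hA
  exact le_antisymm (lim _ _ fun c hc => (comp c hc A hA).1) (lim _ _ fun c hc => (comp c hc A hA).2)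

end
end GM

namespace GM

/-- radial weight -/
noncomputable def gw (q s : ℝ) : ℝ := Real.exp (-s ^ 2 / 2) * s ^ (q - 1)

/-- radial primitive -/
noncomputable def GG (q r : ℝ) : ℝ := ∫ s in (0 : ℝ)..r, gw q s

theorem gw_cont {q : ℝ} (hq : 1 < q) : Continuous (gw q) := by
  unfold gw
  have : Continuous fun s : ℝ => s ^ (q - 1) := Real.continuous_rpow_const (by linarith)
  fun_prop

theorem gw_nonneg {q s : ℝ} (hs : 0 ≤ s) : 0 ≤ gw q s := by
  unfold gw; positivity

theorem gw_pos {q s : ℝ} (hs : 0 < s) : 0 < gw q s := by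
  unfold gw; positivity

theorem GG_deriv {q : ℝ} (hq : 1 < q) (r : ℝ) : HasDerivAt (GG q) (gw q r) r :=
  intervalIntegral.integral_hasDerivAt_right ((gw_cont hq).intervalIntegrable _ _)
    ((gw_cont hq).stronglyMeasurableAtFilter _ _) (gw_cont hq).continuousAt

theorem GG_cont {q : ℝ} (hq : 1 < q) : Continuous (GG q) :=
  continuous_iff_continuousAt.2 fun r => (GG_deriv hq r).continuousAt

theorem GG_mono {q : ℝ} (hq : 1 < q) {a b : ℝ} (ha : 0 ≤ a) (hab : a ≤ b) : GG q a ≤ GG q b := by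
  have : GG q b - GG q a = ∫ s in a..b, gw q s := 
    intervalIntegral.integral_interval_sub_left ((gw_cont hq).intervalIntegrable _ _)
      ((gw_cont hq).intervalIntegrable _ _)
  have h2 : 0 ≤ ∫ s in a..b, gw q s :=
    intervalIntegral.integral_nonneg hab fun s hs => gw_nonneg (ha.trans hs.1)
  linarith

theorem GG_zero {q : ℝ} : GG q 0 = 0 := by simp [GG]

theorem GG_nonneg {q : ℝ} (hq : 1 < q) {a : ℝ} (ha : 0 ≤ a) : 0 ≤ GG q a := by
  rw [← GG_zero (q := q)]; exact GG_mono hq le_rfl ha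

theorem GG_pos {q : ℝ} (hq : 1 < q) {a : ℝ} (ha : 0 < a) : 0 < GG q a :=
  intervalIntegral.intervalIntegral_pos_of_pos_on ((gw_cont hq).intervalIntegrable _ _)
    (fun s hs => gw_pos hs.1) ha

section
variable {E : Type*} [NormedAddCommGroup E] [InnerProductSpace ℝ E]
variable [FiniteDimensional ℝ E] [MeasurableSpace E] [BorelSpace E]

theorem polar {m : ℕ} (hm : Module.finrank ℝ E = m + 1) {F : E → ℝ≥0∞} (hF : Measurable F) :
    ∫⁻ x, F x = ∫⁻ u : sphere (0 : E) 1, ∫⁻ r in Ioi (0 : ℝ),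
      ENNReal.ofReal (r ^ m) * F (r • (u : E)) ∂volume ∂(volume : Measure E).toSphere := by
  have : Nontrivial E := Module.nontrivial_of_finrank_pos (R := ℝ) (by omega)
  have mp := (volume : Measure E).measurePreserving_homeomorphUnitSphereProd
  have hs : MeasurableSet ({0}ᶜ : Set E) := (measurableSet_singleton 0).compl
  let H : sphere (0 : E) 1 × Ioi (0 : ℝ) → ℝ≥0∞ := fun z => F ((z.2 : ℝ) • (z.1 : E))
  have hH : Measurable H := by
    refine hF.comp ?_
    exact (measurable_subtype_coe.comp measurable_snd).smul (measurable_subtype_coe.comp measurable_fst)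
  calc ∫⁻ x, F x = ∫⁻ x in ({0}ᶜ : Set E), F x := by rw [restrict_compl_singleton]
    _ = ∫⁻ x : ({0}ᶜ : Set E), F x ∂((volume : Measure E).comap (↑)) := by
        rw [lintegral_subtype_comap hs]
    _ = ∫⁻ x : ({0}ᶜ : Set E), H (homeomorphUnitSphereProd E x) ∂((volume : Measure E).comap (↑)) := by
        refine lintegral_congr fun x => ?_
        have hx : ‖(x : E)‖ ≠ 0 := norm_ne_zero_iff.2 x.2
        simp only [H, homeomorphUnitSphereProd_apply_snd_coe, homeomorphUnitSphereProd_apply_fst_coe,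
          smul_smul, mul_inv_cancel₀ hx, one_smul]
    _ = ∫⁻ z, H z ∂((volume : Measure E).toSphere.prod (Measure.volumeIoiPow m)) := by
        have := mp.lintegral_comp hH
        rwa [hm, Nat.add_sub_cancel] at this
    _ = ∫⁻ u : sphere (0 : E) 1, ∫⁻ r : Ioi (0 : ℝ), H (u, r) ∂(Measure.volumeIoiPow m)
          ∂(volume : Measure E).toSphere := lintegral_prod _ hH.aemeasurable
    _ = _ := by
        refine lintegral_congr fun u => ?_
        have hm1 : Measurable fun r : Ioi (0 : ℝ) => ENNReal.ofReal ((r : ℝ) ^ m) := by fun_prop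
        have hm2 : Measurable fun r : Ioi (0 : ℝ) => H (u, r) := hH.comp (by fun_prop)
        rw [Measure.volumeIoiPow, lintegral_withDensity_eq_lintegral_mul _ hm1 hm2,
          ← lintegral_subtype_comap measurableSet_Ioi]
        rfl

theorem quermass_polar {K : Set E} (h : IsBody K) {m : ℕ} (hm : Module.finrank ℝ E = m + 1) {q : ℝ}
    (hq : 1 < q) :
    ∫ x in K, Real.exp (-‖x‖ ^ 2 / 2) * ‖x‖ ^ (q - ((m + 1 : ℕ) : ℝ)) =
      ∫ u : sphere (0 : E) 1, GG q (gauge K u)⁻¹ ∂(volume : Measure E).toSphere := by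
  have hKm : MeasurableSet K := h.compact.isClosed.measurableSet
  have hg0 : ∀ u : sphere (0 : E) 1, 0 < gauge K u := fun u => h.gpos (by
    intro h0; have := u.2; rw [h0] at this; simp at this)
  have hgc : Continuous fun u : sphere (0 : E) 1 => GG q (gauge K u)⁻¹ :=
    (GG_cont hq).comp ((h.gcont.comp continuous_subtype_val).inv₀ fun u => (hg0 u).ne')
  have hmeas : Measurable fun x : E => Real.exp (-‖x‖ ^ 2 / 2) * ‖x‖ ^ (q - ((m + 1 : ℕ) : ℝ)) := by
    fun_prop
  rw [integral_eq_lintegral_of_nonneg_ae (Eventually.of_forall fun x => by positivity)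
    hmeas.aestronglyMeasurable, integral_eq_lintegral_of_nonneg_ae
    (Eventually.of_forall fun u => GG_nonneg hq (inv_nonneg.2 (hg0 u).le))
    hgc.aestronglyMeasurable, ← lintegral_indicator hKm, polar hm 
      (hmeas.ennreal_ofReal.indicator hKm)]
  congr 1
  refine lintegral_congr fun u => ?_
  have hu1 : ‖(u : E)‖ = 1 := by simpa using u.2
  have hR := inv_pos.2 (hg0 u)
  have e1 : ∀ r ∈ Ioi (0 : ℝ), ENNReal.ofReal (r ^ m) * K.indicator (fun x => ENNReal.ofReal
      (Real.exp (-‖x‖ ^ 2 / 2) * ‖x‖ ^ (q - ((m + 1 : ℕ) : ℝ)))) (r • (u : E)) =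
      (Iic (gauge K u)⁻¹).indicator (fun s => ENNReal.ofReal (gw q s)) r := by
    intro r hr
    have hr0 : 0 < r := hr
    have hiff : r • (u : E) ∈ K ↔ r ∈ Iic (gauge K u)⁻¹ := by
      rw [h.mem_iff, h.gsmul hr0.le, mem_Iic, ← le_div_iff₀ (hg0 u), one_div]
    by_cases hK : r • (u : E) ∈ K
    · rw [indicator_of_mem hK, indicator_of_mem (hiff.1 hK), ← ENNReal.ofReal_mul (by positivity),
        norm_smul, hu1, mul_one, Real.norm_eq_abs, abs_of_pos hr0, gw]
      congr 1
      have : q - 1 = (m : ℝ) + (q - ((m + 1 : ℕ) : ℝ)) := by push_cast; ring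
      rw [this, Real.rpow_add hr0, Real.rpow_natCast]; ring
    · rw [indicator_of_notMem hK, indicator_of_notMem (fun hh => hK (hiff.2 hh)), mul_zero]
  rw [setLIntegral_congr_fun measurableSet_Ioi e1, lintegral_indicator measurableSet_Iic,
    Measure.restrict_restrict measurableSet_Iic, inter_comm, Ioi_inter_Iic, GG,
    intervalIntegral.integral_of_le hR.le, ofReal_integral_eq_lintegral_ofReal]
  · exact ((gw_cont hq).intervalIntegrable 0 _).1
  · refine (ae_restrict_iff' measurableSet_Ioc).2 (Eventually.of_forall fun s hs => gw_nonneg hs.1.le)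

end
end GM

namespace GM
section
variable {E : Type*} [NormedAddCommGroup E] [InnerProductSpace ℝ E]

/-- support function -/
noncomputable def hs (K : Set E) (v : E) : ℝ := sSup ((fun y => ⟪y, v⟫) '' K)

theorem hs_ge {K : Set E} (hK : IsCompact K) {y : E} (hy : y ∈ K) (v : E) : ⟪y, v⟫ ≤ hs K v :=
  le_csSup (hK.image (by fun_prop)).bddAbove (mem_image_of_mem _ hy)

theorem hs_le {K : Set E} (hne : K.Nonempty) {v : E} {c : ℝ} (hc : ∀ y ∈ K, ⟪y, v⟫ ≤ c) :
    hs K v ≤ c := by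
  refine csSup_le (hne.image _) ?_
  rintro _ ⟨y, hy, rfl⟩
  exact hc y hy

theorem IsBody.nonempty {K : Set E} (h : IsBody K) : K.Nonempty := ⟨0, interior_subset h.zero⟩

theorem hs_lower {K : Set E} (h : IsBody K) {r : ℝ} (hr : 0 < r) (hrK : closedBall (0 : E) r ⊆ K)
    {v : E} (hv : ‖v‖ = 1) : r ≤ hs K v := by
  have := hs_ge h.compact (hrK (by simp [norm_smul, hv, abs_of_pos hr] : r • v ∈ closedBall (0 : E) r)) v
  rw [inner_smul_left, real_inner_self_eq_norm_sq, hv] at this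
  simpa using this

theorem hs_upper {K : Set E} (h : IsBody K) {R : ℝ} (hKR : K ⊆ closedBall (0 : E) R)
    (v : E) : hs K v ≤ R * ‖v‖ := by
  refine hs_le h.nonempty fun y hy => (real_inner_le_norm _ _).trans ?_
  have : ‖y‖ ≤ R := by simpa using hKR hy
  gcongr

theorem hs_nonneg {K : Set E} (h : IsBody K) (v : E) : 0 ≤ hs K v := by
  simpa using hs_ge h.compact (interior_subset h.zero) v

theorem hs_sub {K : Set E} (h : IsBody K) {R : ℝ} (hKR : K ⊆ closedBall (0 : E) R)
    (v w : E) : hs K v ≤ hs K w + R * ‖v - w‖ := by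
  refine hs_le h.nonempty fun y hy => ?_
  have hy' : ‖y‖ ≤ R := by simpa using hKR hy
  have h1 : ⟪y, v⟫ = ⟪y, w⟫ + ⟪y, v - w⟫ := by rw [← inner_add_right]; congr 1; abel
  have h2 := hs_ge h.compact hy w
  have h3 : ⟪y, v - w⟫ ≤ R * ‖v - w‖ := (real_inner_le_norm _ _).trans (by gcongr)
  linarith

theorem hs_cont {K : Set E} (h : IsBody K) : Continuous (hs K) := by
  obtain ⟨r, R, hr, hR, hrK, hKR⟩ := h.exists_bounds
  have : LipschitzWith R.toNNReal (hs K) := by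
    refine LipschitzWith.of_le_add_mul _ fun x y => ?_
    rw [dist_eq_norm, Real.coe_toNNReal _ hR.le]
    exact hs_sub h hKR x y
  exact this.continuous

theorem hs_even {K : Set E} (h : IsBody K) (hK : K = -K) (v : E) : hs K (-v) = hs K v := by
  have key : ∀ v, hs K (-v) ≤ hs K v := by
    intro v
    refine hs_le h.nonempty fun y hy => ?_
    have hy' : -y ∈ K := by rw [hK] at hy; exact hy
    have := hs_ge h.compact hy' v
    rwa [inner_neg_left, ← inner_neg_right] at this
  refine le_antisymm (key v) ?_
  simpa using key (-v)

theorem hs_normal {K : Set E} (h : IsBody K) {x v : E} (hx : x ∈ K)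
    (hn : ∀ y ∈ K, ⟪y, v⟫ ≤ ⟪x, v⟫) : hs K v = ⟪x, v⟫ :=
  le_antisymm (hs_le h.nonempty hn) (hs_ge h.compact hx v)

/-- Wulff shape of `h_K + t f`. -/
def wulff (K : Set E) (f : E → ℝ) (t : ℝ) : Set E :=
  {x | ∀ v : E, ‖v‖ = 1 → ⟪x, v⟫ ≤ hs K v + t * f v}

theorem wulff_symm {K : Set E} (h : IsBody K) (hK : K = -K) {f : E → ℝ} (hf : ∀ v, f (-v) = f v)
    (t : ℝ) : wulff K f t = -wulff K f t := by
  have key : ∀ x, x ∈ wulff K f t → -x ∈ wulff K f t := by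
    intro x hx v hv
    have := hx (-v) (by rwa [norm_neg])
    rw [hs_even h hK, hf] at this
    rwa [inner_neg_left, ← inner_neg_right]
  ext x
  refine ⟨fun hx => key x hx, fun hx => ?_⟩
  have := key _ hx
  rwa [neg_neg] at this

theorem wulff_hs {K : Set E} {f : E → ℝ} {t : ℝ} (hne : (wulff K f t).Nonempty) {v : E}
    (hv : ‖v‖ = 1) : hs (wulff K f t) v ≤ hs K v + t * f v :=
  hs_le hne fun _ hy => hy v hv

variable [FiniteDimensional ℝ E]

theorem wulff_body {K : Set E} (h : IsBody K) {f : E → ℝ} {C r : ℝ}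
    (hC : ∀ v, ‖v‖ = 1 → |f v| ≤ C) (hr : 0 < r) (hrK : closedBall (0 : E) r ⊆ K) {t : ℝ}
    (ht : 0 < t) (htC : t * C ≤ r / 2) : IsBody (wulff K f t) := by
  obtain ⟨_, R, _, hR, _, hKR⟩ := h.exists_bounds
  have hb : ∀ v, ‖v‖ = 1 → |t * f v| ≤ r / 2 := fun v hv => by
    rw [abs_mul, abs_of_pos ht]
    exact (mul_le_mul_of_nonneg_left (hC v hv) ht.le).trans htC
  refine ⟨?_, ?_, ?_⟩
  · refine Metric.isCompact_of_isClosed_isBounded ?_ ?_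
    · have : wulff K f t = ⋂ v : E, ⋂ _ : ‖v‖ = 1, {x | ⟪x, v⟫ ≤ hs K v + t * f v} := by
        ext x; simp [wulff]
      rw [this]
      refine isClosed_iInter fun v => isClosed_iInter fun _ => ?_
      exact isClosed_le (by fun_prop) continuous_const
    · refine Metric.isBounded_closedBall.subset (s := wulff K f t) (t := closedBall 0 (R + r / 2)) ?_
      intro x hx
      rw [mem_closedBall_zero_iff]
      by_cases h0 : x = 0
      · simp [h0]; positivity
      · have hn : 0 < ‖x‖ := norm_pos_iff.2 h0
        have hv : ‖‖x‖⁻¹ • x‖ = 1 := by rw [norm_smul, norm_inv, norm_norm, inv_mul_cancel₀ hn.ne']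
        have h1 := hx _ hv
        rw [inner_smul_right, real_inner_self_eq_norm_sq] at h1
        have h2 := hs_upper h hKR (‖x‖⁻¹ • x)
        have h3 := (abs_le.1 (hb _ hv)).2
        have h4 : ‖x‖⁻¹ * ‖x‖ ^ 2 = ‖x‖ := by field_simp
        rw [hv] at h2
        linarith
  · intro x hx y hy a b ha hb' hab v hv
    rw [inner_add_left, inner_smul_left, inner_smul_left]
    have h1 := mul_le_mul_of_nonneg_left (hx v hv) ha
    have h2 := mul_le_mul_of_nonneg_left (hy v hv) hb'
    have h3 : hs K v + t * f v = a * (hs K v + t * f v) + b * (hs K v + t * f v) := by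
      rw [← add_mul, hab, one_mul]
    simp only [RCLike.conj_to_real]
    linarith
  · rw [mem_interior_iff_mem_nhds]
    refine mem_of_superset (closedBall_mem_nhds (0 : E) (half_pos hr)) ?_
    intro x hx v hv
    rw [mem_closedBall_zero_iff] at hx
    have h1 := real_inner_le_norm x v
    rw [hv, mul_one] at h1
    have h2 := hs_lower h hr hrK hv
    have h3 := (abs_le.1 (hb _ hv)).1
    linarith

/-- shrinking -/
theorem wulff_shrink {K : Set E} (h : IsBody K) {f : E → ℝ} {C r : ℝ}
    (hC : ∀ v, ‖v‖ = 1 → |f v| ≤ C) (hr : 0 < r) (hrK : closedBall (0 : E) r ⊆ K) {t : ℝ}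
    (ht : 0 < t) (htC : t * C ≤ r / 2) {x : E} (hx : x ∈ K) :
    (1 - t * (C / r)) • x ∈ wulff K f t := by
  intro v hv
  have h1 := hs_ge h.compact hx v
  have h2 := hs_lower h hr hrK hv
  have h3 := (abs_le.1 (hC v hv)).1
  have hC0 : 0 ≤ C := (abs_nonneg _).trans (hC v hv)
  have h5 : t * (C / r) ≤ 1 / 2 := by
    rw [← mul_div_assoc, div_le_iff₀ hr]; linarith
  rw [inner_smul_left]
  simp only [RCLike.conj_to_real]
  have h4 : (1 - t * (C / r)) * ⟪x, v⟫ ≤ (1 - t * (C / r)) * hs K v :=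
    mul_le_mul_of_nonneg_left h1 (by linarith)
  have h6 : C ≤ C / r * hs K v := by
    calc C = C / r * r := by field_simp
      _ ≤ _ := by gcongr
  have h7 : t * C ≤ t * (C / r * hs K v) := by gcongr
  have h8 : t * (-C) ≤ t * f v := by gcongr
  linarith

theorem wulff_expand {K : Set E} (h : IsBody K) {f : E → ℝ} (hf : Continuous f) {x v0 : E}
    (hx : x ∈ Reg K) (hv0 : ‖v0‖ = 1) (hn0 : ∀ y ∈ K, ⟪y, v0⟫ ≤ ⟪x, v0⟫) {a : ℝ}
    (ha : a < f v0 / ⟪x, v0⟫) :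
    ∃ t0 > 0, ∀ t, 0 < t → t < t0 → (1 + t * a) • x ∈ wulff K f t := by
  obtain ⟨r, R, hr, hR, hrK, hKR⟩ := h.exists_bounds
  have hp : 0 < ⟪x, v0⟫ := hr.trans_le (normal_lower hr hrK hv0 hn0)
  have hxK := h.frontier_sub hx.1
  rw [lt_div_iff₀ hp] at ha
  set S : Set E := {v | ‖v‖ = 1 ∧ f v ≤ a * ⟪x, v⟫} with hS
  have hSc : IsCompact S := by
    have : S = sphere (0 : E) 1 ∩ {v | f v ≤ a * ⟪x, v⟫} := by
      ext v; simp [hS]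
    rw [this]
    exact (isCompact_sphere _ _).inter_right (isClosed_le hf (by fun_prop))
  have hgc : Continuous fun v => hs K v - ⟪x, v⟫ := (hs_cont h).sub (by fun_prop)
  have hgp : ∀ v ∈ S, 0 < hs K v - ⟪x, v⟫ := by
    intro v hv
    rcases (sub_nonneg.2 (hs_ge h.compact hxK v)).lt_or_eq with h1 | h1
    · exact h1
    · exfalso
      have e : v0 = v := reg_unique h hx hv0 hv.1 hn0 (fun y hy => by
        have := hs_ge h.compact hy v; linarith)
      have := hv.2
      rw [← e] at this
      linarith
  obtain ⟨ε, hε, hεS⟩ : ∃ ε > 0, ∀ v ∈ S, ε ≤ hs K v - ⟪x, v⟫ := by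
    rcases S.eq_empty_or_nonempty with he | hne
    · exact ⟨1, one_pos, by simp [he]⟩
    · obtain ⟨v1, hv1, hmin⟩ := hSc.exists_isMinOn hne hgc.continuousOn
      exact ⟨_, hgp v1 hv1, fun v hv => hmin hv⟩
  obtain ⟨M, hM⟩ : ∃ M, ∀ v ∈ S, |a * ⟪x, v⟫ - f v| ≤ M := by
    have hc : Continuous fun v => a * ⟪x, v⟫ - f v := by fun_prop
    obtain ⟨M, hM⟩ := hSc.exists_bound_of_continuousOn hc.continuousOn
    exact ⟨M, hM⟩
  refine ⟨ε / (|M| + 1), by positivity, fun t ht htt v hv => ?_⟩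
  rw [inner_smul_left]
  simp only [RCLike.conj_to_real]
  by_cases hvS : v ∈ S
  · have h1 := hεS v hvS
    have h2 := (le_abs_self _).trans ((hM v hvS).trans (le_abs_self M))
    rw [lt_div_iff₀ (by positivity)] at htt
    nlinarith
  · have h1 : a * ⟪x, v⟫ < f v := by
      by_contra hh
      exact hvS ⟨hv, not_lt.1 hh⟩
    have h2 := hs_ge h.compact hxK v
    nlinarith

end
end GM

namespace GM

theorem GG_lip {q : ℝ} (hq : 1 < q) {R a b : ℝ} (ha : 0 ≤ a) (haR : a ≤ R) (hb : 0 ≤ b)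
    (hbR : b ≤ R) : |GG q b - GG q a| ≤ R ^ (q - 1) * |b - a| := by
  have e : GG q b - GG q a = ∫ s in a..b, gw q s := 
    intervalIntegral.integral_interval_sub_left ((gw_cont hq).intervalIntegrable _ _)
      ((gw_cont hq).intervalIntegrable _ _)
  rw [e, ← Real.norm_eq_abs]
  refine intervalIntegral.norm_integral_le_of_norm_le_const fun s hs => ?_
  rw [uIoc, mem_Ioc] at hs
  have hs0 : 0 ≤ s := (le_min ha hb).trans hs.1.le
  have hsR : s ≤ R := hs.2.trans (max_le haR hbR)
  rw [Real.norm_eq_abs, abs_of_nonneg (gw_nonneg hs0), gw]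
  have h1 : Real.exp (-s ^ 2 / 2) ≤ 1 := Real.exp_le_one_iff.2 (by nlinarith [sq_nonneg s])
  have h2 : s ^ (q - 1) ≤ R ^ (q - 1) := Real.rpow_le_rpow hs0 hsR (by linarith)
  calc _ ≤ 1 * R ^ (q - 1) := mul_le_mul h1 h2 (by positivity) zero_le_one
    _ = _ := one_mul _

theorem gw_le {q : ℝ} (hq : 1 < q) {R s : ℝ} (hs0 : 0 ≤ s) (hsR : s ≤ R) : gw q s ≤ R ^ (q - 1) := by
  rw [gw]
  have h1 : Real.exp (-s ^ 2 / 2) ≤ 1 := Real.exp_le_one_iff.2 (by nlinarith [sq_nonneg s])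
  have h2 : s ^ (q - 1) ≤ R ^ (q - 1) := Real.rpow_le_rpow hs0 hsR (by linarith)
  calc _ ≤ 1 * R ^ (q - 1) := mul_le_mul h1 h2 (by positivity) zero_le_one
    _ = _ := one_mul _

section
variable {E : Type*} [NormedAddCommGroup E] [InnerProductSpace ℝ E]
variable [FiniteDimensional ℝ E] [MeasurableSpace E] [BorelSpace E]

instance theta_finite (K : Set E) : IsFiniteMeasure (theta K) := by
  unfold theta; infer_instance

theorem theta_ae_frontier {K : Set E} (h : IsBody K) : ∀ᵐ x ∂theta K, x ∈ frontier K := theta_frontier h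

theorem theta_ae_reg {K : Set E} (h : IsBody K) : ∀ᵐ x ∂theta K, x ∈ Reg K := theta_reg h

theorem gq_meas {K' : Set E} (h' : IsBody K') {q : ℝ} (hq : 1 < q) (l : ℝ) :
    Measurable fun x : E => GG q (l * (‖x‖ / gauge K' x)) :=
  (GG_cont hq).measurable.comp ((measurable_norm.div h'.gcont.measurable).const_mul l)

theorem quermass_theta {K K' : Set E} (h : IsBody K) (h' : IsBody K') {m : ℕ}
    (hm : Module.finrank ℝ E = m + 1) {q : ℝ} (hq : 1 < q) :
    ∫ x in K', Real.exp (-‖x‖ ^ 2 / 2) * ‖x‖ ^ (q - ((m + 1 : ℕ) : ℝ)) =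
      ∫ x, GG q (‖x‖ / gauge K' x) ∂theta K := by
  rw [quermass_polar h' hm hq, theta, integral_map (rad_comp_meas h).aemeasurable
    (by simpa using (gq_meas h' hq 1).aestronglyMeasurable)]
  refine integral_congr_ae (Eventually.of_forall fun u => ?_)
  have hu1 : ‖(u : E)‖ = 1 := by simp
  have hu0 : (u : E) ≠ 0 := by intro h0; simp [h0] at hu1
  have hg := h.gpos hu0
  have hg' := h'.gpos hu0
  simp only [rad]
  rw [h'.gsmul (inv_nonneg.2 hg.le), norm_smul, hu1, norm_inv, Real.norm_eq_abs, abs_of_pos hg]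
  congr 1
  field_simp

/-- variation integrand -/
noncomputable def wt (q : ℝ) (ν : E → E) (f : E → ℝ) (x : E) : ℝ :=
  gw q ‖x‖ * ‖x‖ * (f (ν x) / ⟪x, ν x⟫)

theorem wt_meas {K : Set E} {ν : E → E} (hν : IsSel K ν) {q : ℝ} (hq : 1 < q) {f : E → ℝ}
    (hf : Measurable f) : Measurable (wt q ν f) :=
  (((gw_cont hq).measurable.comp measurable_norm).mul measurable_norm).mul
    ((hf.comp hν.meas).div (measurable_id.inner hν.meas))

theorem wt_bound {K : Set E} {ν : E → E} (hν : IsSel K ν) {q : ℝ} (hq : 1 < q) {f : E → ℝ}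
    {C r R : ℝ} (hC : ∀ v, ‖v‖ = 1 → |f v| ≤ C) (hr : 0 < r) (hrK : closedBall (0 : E) r ⊆ K) 
    {x : E} (hx : x ∈ frontier K) (hxR : ‖x‖ ≤ R) : |wt q ν f x| ≤ R ^ (q - 1) * R * (C / r) := by
  have hp := normal_lower hr hrK (hν.unit x) (hν.normal _ hx)
  have h1 := gw_le hq (norm_nonneg x) hxR
  have h2 := gw_nonneg (q := q) (norm_nonneg x)
  have hC' := hC _ (hν.unit x)
  have hC0 : 0 ≤ C := (abs_nonneg _).trans hC'
  have hR : 0 ≤ R := (norm_nonneg x).trans hxR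
  rw [wt, abs_mul, abs_mul, abs_of_nonneg h2, abs_norm, abs_div, abs_of_pos (hr.trans_le hp)]
  have h3 : gw q ‖x‖ * ‖x‖ ≤ R ^ (q - 1) * R := mul_le_mul h1 hxR (norm_nonneg _) (by positivity)
  have h4 : |f (ν x)| / ⟪x, ν x⟫ ≤ C / r := div_le_div₀ hC0 hC' hr hp
  exact mul_le_mul h3 h4 (div_nonneg (abs_nonneg _) (hr.le.trans hp)) (by positivity)

theorem variation {K : Set E} (h : IsBody K) {ν : E → E} (hν : IsSel K ν) {q : ℝ} (hq : 1 < q)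
    {f : E → ℝ} (hf : Continuous f) (hD : 0 < ∫ x, wt q ν f x ∂theta K) {ε : ℝ} (hε : 0 < ε) :
    ∃ t, 0 < t ∧ t < ε ∧ IsBody (wulff K f t) ∧
      ∫ x, GG q (‖x‖ / gauge K x) ∂theta K < ∫ x, GG q (‖x‖ / gauge (wulff K f t) x) ∂theta K := by
  obtain ⟨r, R, hr, hR, hrK, hKR⟩ := h.exists_bounds
  obtain ⟨C', hC'⟩ := (isCompact_sphere (0 : E) 1).exists_bound_of_continuousOn hf.continuousOn
  set C := |C'| + 1 with hCdef
  have hC0 : 0 < C := by positivity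
  have hC : ∀ v, ‖v‖ = 1 → |f v| ≤ C := fun v hv => by
    have := hC' v (by simpa using hv)
    rw [Real.norm_eq_abs] at this
    linarith [le_abs_self C']
  set τ := min (ε / 2) (r / (2 * C)) with hτ
  have hτ0 : 0 < τ := by positivity
  let t : ℕ → ℝ := fun k => τ / (k + 1)
  have ht0 : ∀ k, 0 < t k := fun k => by positivity
  have htτ : ∀ k, t k ≤ τ := fun k => div_le_self hτ0.le (by linarith [Nat.cast_nonneg (α := ℝ) k])
  have htε : ∀ k, t k < ε := fun k => ((htτ k).trans (min_le_left _ _)).trans_lt (by linarith)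
  have htC : ∀ k, t k * C ≤ r / 2 := fun k => by
    have := (htτ k).trans (min_le_right _ _)
    rw [le_div_iff₀ (by positivity)] at this
    linarith
  have htlim : Tendsto t atTop (𝓝 0) := by
    have := tendsto_one_div_add_atTop_nhds_zero_nat (𝕜 := ℝ)
    have := this.const_mul τ
    simpa [t, div_eq_mul_inv] using this
  have htlim' : Tendsto t atTop (𝓝[>] 0) :=
    tendsto_nhdsWithin_iff.2 ⟨htlim, Eventually.of_forall ht0⟩
  have hB : ∀ k, IsBody (wulff K f (t k)) := fun k => wulff_body h hC hr hrK (ht0 k) (htC k)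
  let F : ℕ → E → ℝ := fun k x => 
    min ((GG q (‖x‖ / gauge (wulff K f (t k)) x) - GG q (‖x‖ / gauge K x)) / t k) (wt q ν f x)
  have hFm : ∀ k, Measurable (F k) := fun k => by
    have h1 := gq_meas (hB k) hq 1
    have h2 := gq_meas h hq 1
    simp only [one_mul] at h1 h2
    exact ((h1.sub h2).div_const _).min (wt_meas hν hq hf.measurable)
  -- gauge bounds
  have gb : ∀ k, ∀ x ∈ frontier K, ∀ s : ℝ, 0 < s → s • x ∈ wulff K f (t k) → 
      ‖x‖ * s ≤ ‖x‖ / gauge (wulff K f (t k)) x := by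
    intro k x hx s hs hsx
    have h1 := (hB k).mem_iff.1 hsx
    rw [(hB k).gsmul hs.le] at h1
    have hg := (hB k).gpos (h.frontier_ne hx)
    rw [le_div_iff₀ hg, mul_assoc]
    exact mul_le_of_le_one_right (norm_nonneg _) h1
  have hbound : ∀ k, ∀ᵐ x ∂theta K, ‖F k x‖ ≤ R ^ (q - 1) * R * (C / r) := by
    intro k
    filter_upwards [theta_ae_frontier h] with x hx
    have hxR : ‖x‖ ≤ R := by simpa using hKR (h.frontier_sub hx)
    have hw := abs_le.1 (wt_bound hν hq hC hr hrK hx hxR)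
    rw [Real.norm_eq_abs, abs_le]
    refine ⟨le_min ?_ hw.1, (min_le_right _ _).trans hw.2⟩
    have hsh := wulff_shrink h hC hr hrK (ht0 k) (htC k) (h.frontier_sub hx)
    have h5 : t k * (C / r) ≤ 1 / 2 := by
      rw [← mul_div_assoc, div_le_iff₀ hr]; linarith [htC k]
    have hg1 := gb k x hx _ (by linarith) hsh
    rw [h.frontier_iff.1 hx, div_one, le_div_iff₀ (ht0 k)]
    have h6 : 0 ≤ ‖x‖ * (1 - t k * (C / r)) := mul_nonneg (norm_nonneg _) (by linarith)
    have hpos : 0 ≤ t k * (C / r) := by have := ht0 k; positivity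
    have h6' : ‖x‖ * (1 - t k * (C / r)) ≤ ‖x‖ := mul_le_of_le_one_right (norm_nonneg _) (by linarith)
    have h7 := GG_mono hq h6 hg1
    have h8 := (abs_le.1 (GG_lip hq (norm_nonneg x) hxR h6 (h6'.trans hxR))).1
    have h9 : |‖x‖ * (1 - t k * (C / r)) - ‖x‖| = ‖x‖ * (t k * (C / r)) := by
      rw [abs_of_nonpos (by linarith)]; ring
    rw [h9] at h8
    have h10 : R ^ (q - 1) * (‖x‖ * (t k * (C / r))) ≤ R ^ (q - 1) * (R * (t k * (C / r))) := by
      gcongr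
    linarith
  have hlim : ∀ᵐ x ∂theta K, Tendsto (fun k => F k x) atTop (𝓝 (wt q ν f x)) := by
    filter_upwards [theta_ae_reg h] with x hx
    have hx0 : 0 < ‖x‖ := norm_pos_iff.2 (h.frontier_ne hx.1)
    have hgx : 0 < gw q ‖x‖ * ‖x‖ := mul_pos (gw_pos hx0) hx0
    refine tendsto_order.2 ⟨fun b hb => ?_, fun b hb => Eventually.of_forall fun k =>
      (min_le_right _ _).trans_lt hb⟩
    obtain ⟨a, hab, ha⟩ : ∃ a, b < gw q ‖x‖ * ‖x‖ * a ∧ a < f (ν x) / ⟪x, ν x⟫ := by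
      rw [wt, ← div_lt_iff₀' hgx] at hb
      obtain ⟨a, h1, h2⟩ := exists_between hb
      exact ⟨a, (div_lt_iff₀' hgx).1 h1, h2⟩
    obtain ⟨t0, ht00, hexp⟩ := wulff_expand h hf hx (hν.unit x) (hν.normal x hx.1) ha
    have hder : HasDerivAt (fun s : ℝ => GG q (‖x‖ * (1 + s * a))) (gw q ‖x‖ * (‖x‖ * a)) 0 := by
      have h1 : HasDerivAt (fun s : ℝ => ‖x‖ * (1 + s * a)) (‖x‖ * a) 0 := by
        have := (((hasDerivAt_id (0 : ℝ)).mul_const a).const_add 1).const_mul ‖x‖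
        simpa using this
      have h2 : HasDerivAt (GG q) (gw q ‖x‖) (‖x‖ * (1 + 0 * a)) := by
        simpa using GG_deriv hq ‖x‖
      exact h2.comp 0 h1
    have hsl := hder.tendsto_slope_zero_right
    have hsl' := hsl.comp htlim'
    have e1 := hsl'.eventually_const_lt (show b < gw q ‖x‖ * (‖x‖ * a) by linarith)
    have e2 : ∀ᶠ k in atTop, t k < t0 := htlim.eventually_lt_const ht00
    have e3 : ∀ᶠ k in atTop, 0 < 1 + t k * a := by
      have : Tendsto (fun k => 1 + t k * a) atTop (𝓝 (1 + 0 * a)) := (htlim.mul_const a).const_add 1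
      exact this.eventually_const_lt (by simp)
    filter_upwards [e1, e2, e3] with k k1 k2 k3
    refine lt_min ?_ hb
    have hg1 := gb k x hx.1 _ k3 (hexp _ (ht0 k) k2)
    have hg2 := GG_mono hq (by positivity) hg1
    simp only [Function.comp, zero_add, zero_mul, add_zero, mul_one, smul_eq_mul] at k1
    rw [h.frontier_iff.1 hx.1, div_one, lt_div_iff₀ (ht0 k)]
    rw [← div_eq_inv_mul, lt_div_iff₀ (ht0 k)] at k1
    linarith
  have hT := tendsto_integral_of_dominated_convergence (fun _ => R ^ (q - 1) * R * (C / r))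
    (fun k => (hFm k).aestronglyMeasurable) (integrable_const _) hbound hlim
  obtain ⟨k, hk⟩ := (hT.eventually_const_lt hD).exists
  refine ⟨t k, ht0 k, htε k, hB k, ?_⟩
  -- integrability
  have hInt : ∀ K' : Set E, IsBody K' → Integrable (fun x => GG q (‖x‖ / gauge K' x)) (theta K) := by
    intro K' h'
    obtain ⟨r', R', hr', hR', hrK', hKR'⟩ := h'.exists_bounds
    have hm' := gq_meas h' hq 1
    simp only [one_mul] at hm'
    refine Integrable.mono' (integrable_const (GG q R')) hm'.aestronglyMeasurable ?_
    filter_upwards [theta_ae_frontier h] with x hx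
    have hx0 := h.frontier_ne hx
    have hg := h'.gpos hx0
    have h0 : 0 ≤ ‖x‖ / gauge K' x := by positivity
    rw [Real.norm_eq_abs, abs_of_nonneg (GG_nonneg hq h0)]
    refine GG_mono hq h0 ?_
    have := hKR' (h'.frontier_sub (h'.rad_mem hx0))
    rw [mem_closedBall_zero_iff, rad, norm_smul, norm_inv, Real.norm_eq_abs, abs_of_pos hg] at this
    rw [div_eq_inv_mul]; exact this
  have hi1 := hInt _ (hB k)
  have hi2 := hInt _ h
  have hFi : Integrable (F k) (theta K) := Integrable.mono' (integrable_const _)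
    (hFm k).aestronglyMeasurable (hbound k)
  have hle : ∫ x, F k x ∂theta K ≤ ∫ x, (GG q (‖x‖ / gauge (wulff K f (t k)) x) - GG q (‖x‖ / gauge K x)) / t k ∂theta K :=
    integral_mono hFi ((hi1.sub hi2).div_const _) fun x => min_le_left _ _
  rw [integral_div, integral_sub hi1 hi2] at hle
  have := hk.trans_le hle
  have := (div_pos_iff_of_pos_right (ht0 k)).1 this
  linarith

end
end GM

namespace GM

theorem rpow_tangent {p a b : ℝ} (hp : 1 < p) (ha : 0 ≤ a) (hb : 0 ≤ b) :
    b ^ p - a ^ p ≤ p * (b ^ (p - 1) * (b - a)) := by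
  rcases hb.eq_or_lt with rfl | hb
  · rw [Real.zero_rpow (by linarith), Real.zero_rpow (by linarith)]
    have : 0 ≤ a ^ p := by positivity
    linarith
  · have h1 := one_add_mul_self_le_rpow_one_add (s := a / b - 1) (by
      have : 0 ≤ a / b := by positivity
      linarith) hp.le
    have e : (1 + (a / b - 1)) ^ p = a ^ p / b ^ p := by
      rw [add_sub_cancel, Real.div_rpow ha hb.le]
    have hbp : 0 < b ^ p := by positivity
    rw [e, le_div_iff₀ hbp] at h1
    have e2 : b ^ p = b ^ (p - 1) * b := by
      rw [Real.rpow_sub_one hb.ne']; field_simp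
    have e3 : (1 + p * (a / b - 1)) * b ^ p = b ^ p + p * (b ^ (p - 1) * (a - b)) := by
      rw [e2]; field_simp
    rw [e3] at h1
    linarith

section
variable {E : Type*} [NormedAddCommGroup E] [InnerProductSpace ℝ E]

theorem scale_body {K : Set E} (h : IsBody K) {l : ℝ} (hl : 0 < l) : IsBody (l • K) := by
  refine ⟨h.compact.smul l, h.convex.smul l, ?_⟩
  rw [interior_smul₀ hl.ne']
  exact ⟨0, h.zero, smul_zero _⟩

theorem scale_symm {K : Set E} (hK : K = -K) (l : ℝ) : l • K = -(l • K) := by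
  rw [← smul_set_neg, ← hK]

theorem scale_gauge {K : Set E} {l : ℝ} (hl : 0 < l) (x : E) :
    gauge (l • K) x = l⁻¹ * gauge K x := by
  rw [gauge_smul_left_of_nonneg hl.le]; rfl

theorem scale_hs {K : Set E} (h : IsBody K) {l : ℝ} (hl : 0 < l) (hl1 : l ≤ 1) (v : E) :
    hs (l • K) v ≤ hs K v := by
  refine hs_le (scale_body h hl).nonempty ?_
  rintro _ ⟨y, hy, rfl⟩
  have h1 := hs_ge h.compact hy v
  have h2 := hs_nonneg h v
  show ⟪l • y, v⟫ ≤ _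
  rw [inner_smul_left]
  simp only [RCLike.conj_to_real]
  nlinarith

variable [FiniteDimensional ℝ E] [MeasurableSpace E] [BorelSpace E]

theorem level {K K' : Set E} (h : IsBody K) (h' : IsBody K') {q : ℝ} (hq : 1 < q) {c : ℝ}
    (hc : 0 < c) (hcV : c < ∫ x, GG q (‖x‖ / gauge K' x) ∂theta K) :
    ∃ l : ℝ, 0 < l ∧ l < 1 ∧ ∫ x, GG q (‖x‖ / gauge (l • K') x) ∂theta K = c := by
  obtain ⟨r', R', hr', hR', hrK', hKR'⟩ := h'.exists_bounds
  have hcont : ContinuousOn (fun l : ℝ => ∫ x, GG q (l * (‖x‖ / gauge K' x)) ∂theta K) (Icc 0 1) := by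
    refine continuousOn_of_dominated (bound := fun _ => GG q R') 
      (fun l _ => (gq_meas h' hq l).aestronglyMeasurable) ?_ (integrable_const _) ?_
    · intro l hl
      filter_upwards [theta_ae_frontier h] with x hx
      have hx0 := h.frontier_ne hx
      have hg := h'.gpos hx0
      have h0 : 0 ≤ ‖x‖ / gauge K' x := by positivity
      have h0' : 0 ≤ l * (‖x‖ / gauge K' x) := mul_nonneg hl.1 h0
      rw [Real.norm_eq_abs, abs_of_nonneg (GG_nonneg hq h0')]
      refine GG_mono hq h0' ?_
      have := hKR' (h'.frontier_sub (h'.rad_mem hx0))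
      rw [mem_closedBall_zero_iff, rad, norm_smul, norm_inv, Real.norm_eq_abs, abs_of_pos hg] at this
      rw [← div_eq_inv_mul] at this
      exact (mul_le_of_le_one_left h0 hl.2).trans this
    · refine Eventually.of_forall fun x => Continuous.continuousOn ?_
      exact (GG_cont hq).comp (by fun_prop)
  have hm : c ∈ Ioo ((fun l : ℝ => ∫ x, GG q (l * (‖x‖ / gauge K' x)) ∂theta K) 0)
      ((fun l : ℝ => ∫ x, GG q (l * (‖x‖ / gauge K' x)) ∂theta K) 1) := by
    simp only [zero_mul, GG_zero, integral_zero, one_mul]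
    exact ⟨hc, hcV⟩
  obtain ⟨l, hl, hlc⟩ := intermediate_value_Ioo zero_le_one hcont hm
  refine ⟨l, hl.1, hl.2, ?_⟩
  rw [← hlc]
  refine integral_congr_ae (Eventually.of_forall fun x => ?_)
  simp only [scale_gauge hl.1]
  congr 1
  have := hl.1.ne'
  rw [div_mul_eq_div_div, div_inv_eq_mul, mul_comm ‖x‖, mul_div_assoc]

theorem int_sph {μ : Measure E} [IsFiniteMeasure μ] (hμ : ∀ᵐ v ∂μ, ‖v‖ = 1) {f : E → ℝ}
    (hf : Continuous f) : Integrable f μ := by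
  obtain ⟨C, hC⟩ := (isCompact_sphere (0 : E) 1).exists_bound_of_continuousOn hf.continuousOn
  refine Integrable.mono' (integrable_const C) hf.aestronglyMeasurable ?_
  filter_upwards [hμ] with v hv
  exact hC v (by simpa using hv)

theorem first_order {K : Set E} (h : IsBody K) (hK : K = -K) {ν : E → E} (hν : IsSel K ν) {p q : ℝ}
    (hp : 1 < p) (hq : 1 < q) {μ : Measure E} [IsFiniteMeasure μ] (hμ : ∀ᵐ v ∂μ, ‖v‖ = 1)
    (hVpos : 0 < ∫ x, GG q (‖x‖ / gauge K x) ∂theta K)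
    (hopt : ∀ K' : Set E, IsBody K' → K' = -K' → 
      ∫ x, GG q (‖x‖ / gauge K' x) ∂theta K = ∫ x, GG q (‖x‖ / gauge K x) ∂theta K →
      ∫ v, hs K v ^ p ∂μ ≤ ∫ v, hs K' v ^ p ∂μ)
    {f : E → ℝ} (hf : Continuous f) (hfe : ∀ v, f (-v) = f v)
    (hD : 0 < ∫ x, wt q ν f x ∂theta K) : 0 ≤ ∫ v, f v * hs K v ^ (p - 1) ∂μ := by
  have hhc := hs_cont h
  have cp1 : ∀ t : ℝ, Continuous fun v => (hs K v + t * f v) ^ (p - 1) := fun t =>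
    (Real.continuous_rpow_const (by linarith)).comp (hhc.add (hf.const_mul t))
  have cp : ∀ t : ℝ, Continuous fun v => (hs K v + t * f v) ^ p := fun t =>
    (Real.continuous_rpow_const (by linarith)).comp (hhc.add (hf.const_mul t))
  have cp0 : Continuous fun v => hs K v ^ p := (Real.continuous_rpow_const (by linarith)).comp hhc
  have step : ∀ k : ℕ, ∃ t : ℝ, 0 < t ∧ t < 1 / ((k : ℝ) + 1) ∧
      0 ≤ ∫ v, f v * (hs K v + t * f v) ^ (p - 1) ∂μ := by
    intro k
    obtain ⟨t, ht0, htk, hB, hV⟩ := variation h hν hq hf hD (ε := 1 / ((k : ℝ) + 1)) (by positivity)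
    refine ⟨t, ht0, htk, ?_⟩
    obtain ⟨l, hl0, hl1, hlV⟩ := level h hB hq hVpos hV
    have h1 := hopt _ (scale_body hB hl0) (scale_symm (wulff_symm h hK hfe t) l) hlV
    have hb0 : ∀ v, ‖v‖ = 1 → hs (l • wulff K f t) v ≤ hs K v + t * f v := fun v hv =>
      (scale_hs hB hl0 hl1.le v).trans (wulff_hs hB.nonempty hv)
    have h2 : ∫ v, hs (l • wulff K f t) v ^ p ∂μ ≤ ∫ v, (hs K v + t * f v) ^ p ∂μ := by
      refine integral_mono_of_nonneg (Eventually.of_forall fun v => ?_) (int_sph hμ (cp t)) ?_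
      · exact Real.rpow_nonneg (hs_nonneg (scale_body hB hl0) v) _
      · filter_upwards [hμ] with v hv
        exact Real.rpow_le_rpow (hs_nonneg (scale_body hB hl0) v) (hb0 v hv) (by linarith)
    have ci : Continuous fun v => f v * (hs K v + t * f v) ^ (p - 1) := hf.mul (cp1 t)
    have h3 : ∫ v, ((hs K v + t * f v) ^ p - hs K v ^ p) ∂μ ≤ 
        ∫ v, (p * t) * (f v * (hs K v + t * f v) ^ (p - 1)) ∂μ := by
      refine integral_mono_ae (int_sph hμ ((cp t).sub cp0)) ((int_sph hμ ci).const_mul _) ?_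
      filter_upwards [hμ] with v hv
      have h0 : 0 ≤ hs K v + t * f v := (hs_nonneg (scale_body hB hl0) v).trans (hb0 v hv)
      refine (rpow_tangent hp (hs_nonneg h v) h0).trans_eq ?_
      ring
    rw [integral_sub (int_sph hμ (cp t)) (int_sph hμ cp0), integral_const_mul] at h3
    have h4 : 0 ≤ (p * t) * ∫ v, f v * (hs K v + t * f v) ^ (p - 1) ∂μ := by linarith
    exact nonneg_of_mul_nonneg_right h4 (by positivity)
  choose t ht0 htk hI using step
  have htlim : Tendsto t atTop (𝓝 0) := squeeze_zero (fun k => (ht0 k).le) (fun k => (htk k).le)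
    tendsto_one_div_add_atTop_nhds_zero_nat
  obtain ⟨r, R, hr, hR, hrK, hKR⟩ := h.exists_bounds
  obtain ⟨C, hC⟩ := (isCompact_sphere (0 : E) 1).exists_bound_of_continuousOn hf.continuousOn
  have hT : Tendsto (fun k => ∫ v, f v * (hs K v + t k * f v) ^ (p - 1) ∂μ) atTop
      (𝓝 (∫ v, f v * hs K v ^ (p - 1) ∂μ)) := by
    refine tendsto_integral_of_dominated_convergence (fun _ => C * (R + C) ^ (p - 1))
      (fun k => (hf.mul (cp1 (t k))).aestronglyMeasurable) (integrable_const _) ?_ ?_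
    · intro k
      filter_upwards [hμ] with v hv
      have hfv := hC v (by simpa using hv)
      have hC0 : 0 ≤ C := (norm_nonneg _).trans hfv
      rw [norm_mul]
      refine mul_le_mul hfv ?_ (norm_nonneg _) hC0
      rw [Real.norm_eq_abs]
      refine (Real.abs_rpow_le_abs_rpow _ _).trans ?_
      refine Real.rpow_le_rpow (abs_nonneg _) ?_ (by linarith)
      refine (abs_add_le _ _).trans ?_
      have h1 := hs_upper h hKR v
      rw [hv, mul_one] at h1
      have ht1 : t k ≤ 1 := (htk k).le.trans (by
        rw [div_le_one (by positivity)]; linarith [Nat.cast_nonneg (α := ℝ) k])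
      rw [abs_of_nonneg (hs_nonneg h v), abs_mul, abs_of_pos (ht0 k)]
      rw [Real.norm_eq_abs] at hfv
      have : t k * |f v| ≤ 1 * C := mul_le_mul ht1 hfv (abs_nonneg _) zero_le_one
      linarith
    · refine Eventually.of_forall fun v => ?_
      refine Tendsto.const_mul _ ?_
      have h1 : Tendsto (fun k => hs K v + t k * f v) atTop (𝓝 (hs K v)) := by
        have := (htlim.mul_const (f v)).const_add (hs K v)
        simpa using this
      exact ((Real.continuous_rpow_const (by linarith : 0 ≤ p - 1)).tendsto _).comp h1
  exact ge_of_tendsto hT (Eventually.of_forall hI)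

theorem wt_int {K : Set E} (h : IsBody K) {ν : E → E} (hν : IsSel K ν) {q : ℝ} (hq : 1 < q)
    {f : E → ℝ} (hf : Continuous f) : Integrable (wt q ν f) (theta K) := by
  obtain ⟨r, R, hr, hR, hrK, hKR⟩ := h.exists_bounds
  obtain ⟨C, hC⟩ := (isCompact_sphere (0 : E) 1).exists_bound_of_continuousOn hf.continuousOn
  refine Integrable.mono' (integrable_const (R ^ (q - 1) * R * (C / r))) 
    (wt_meas hν hq hf.measurable).aestronglyMeasurable ?_
  filter_upwards [theta_ae_frontier h] with x hx
  exact wt_bound hν hq (fun v hv => hC v (by simpa using hv)) hr hrK hx 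
    (by simpa using hKR (h.frontier_sub hx))

theorem lagrange {K : Set E} (h : IsBody K) (hK : K = -K) {ν : E → E} (hν : IsSel K ν) {p q : ℝ}
    (hp : 1 < p) (hq : 1 < q) {μ : Measure E} [IsFiniteMeasure μ] (hμ : ∀ᵐ v ∂μ, ‖v‖ = 1)
    (hVpos : 0 < ∫ x, GG q (‖x‖ / gauge K x) ∂theta K)
    (hopt : ∀ K' : Set E, IsBody K' → K' = -K' → 
      ∫ x, GG q (‖x‖ / gauge K' x) ∂theta K = ∫ x, GG q (‖x‖ / gauge K x) ∂theta K →
      ∫ v, hs K v ^ p ∂μ ≤ ∫ v, hs K' v ^ p ∂μ) :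
    ∃ c : ℝ, 0 ≤ c ∧ ∀ f : E → ℝ, Continuous f → (∀ v, f (-v) = f v) →
      ∫ v, f v * hs K v ^ (p - 1) ∂μ = c * ∫ x, wt q ν f x ∂theta K := by
  have hhc := hs_cont h
  have cp1 : Continuous fun v => hs K v ^ (p - 1) :=
    (Real.continuous_rpow_const (by linarith)).comp hhc
  set Dh := ∫ x, wt q ν (hs K) x ∂theta K with hDh
  set Lh := ∫ v, hs K v * hs K v ^ (p - 1) ∂μ with hLh
  have hpos : ∀ᵐ x ∂theta K, 0 < wt q ν (hs K) x := by
    filter_upwards [theta_ae_frontier h] with x hx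
    obtain ⟨r, R, hr, hR, hrK, hKR⟩ := h.exists_bounds
    have h1 := hs_normal h (h.frontier_sub hx) (hν.normal x hx)
    have h2 := normal_lower hr hrK (hν.unit x) (hν.normal x hx)
    have hx0 : 0 < ‖x‖ := norm_pos_iff.2 (h.frontier_ne hx)
    rw [wt, h1, div_self (hr.trans_le h2).ne', mul_one]
    exact mul_pos (gw_pos hx0) hx0
  have hDpos : 0 < Dh := by
    have h0 : 0 ≤ᵐ[theta K] wt q ν (hs K) := hpos.mono fun x hx => hx.le
    rcases (integral_nonneg_of_ae h0).lt_or_eq with h1 | h1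
    · exact h1
    · exfalso
      have h2 := (integral_eq_zero_iff_of_nonneg_ae h0 (wt_int h hν hq hhc)).1 h1.symm
      have h3 : ∀ᵐ x ∂theta K, False := by
        filter_upwards [hpos, h2] with x h3 h4
        rw [h4] at h3
        exact lt_irrefl _ h3
      have h4 : theta K = 0 := by
        rw [← ae_eq_bot]; exact eventually_false_iff_eq_bot.1 h3
      rw [h4] at hVpos
      simp at hVpos
  have key : ∀ f : E → ℝ, Continuous f → (∀ v, f (-v) = f v) →
      Lh / Dh * ∫ x, wt q ν f x ∂theta K ≤ ∫ v, f v * hs K v ^ (p - 1) ∂μ := by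
    intro f hf hfe
    set Df := ∫ x, wt q ν f x ∂theta K with hDf
    have main : ∀ ε : ℝ, 0 < ε → 0 ≤ (∫ v, f v * hs K v ^ (p - 1) ∂μ) + (ε - Df / Dh) * Lh := by
      intro ε hε
      set a := ε - Df / Dh with ha
      have hgc : Continuous fun v => f v + a * hs K v := hf.add (hhc.const_mul a)
      have hDg : ∫ x, wt q ν (fun v => f v + a * hs K v) x ∂theta K = Df + a * Dh := by
        rw [hDf, hDh, ← integral_const_mul, ← integral_add (wt_int h hν hq hf)
          ((wt_int h hν hq hhc).const_mul a)]
        refine integral_congr_ae (Eventually.of_forall fun x => ?_)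
        simp only [wt]; ring
      have hLg : ∫ v, (f v + a * hs K v) * hs K v ^ (p - 1) ∂μ = 
          (∫ v, f v * hs K v ^ (p - 1) ∂μ) + a * Lh := by
        have i1 : Integrable (fun v => f v * hs K v ^ (p - 1)) μ := int_sph hμ (hf.mul cp1)
        have i2 : Integrable (fun v => hs K v * hs K v ^ (p - 1)) μ := int_sph hμ (hhc.mul cp1)
        rw [hLh, ← integral_const_mul, ← integral_add i1 (i2.const_mul a)]
        refine integral_congr_ae (Eventually.of_forall fun x => ?_)
        ring
      rw [← hLg]
      refine first_order h hK hν hp hq hμ hVpos hopt hgc (fun v => by rw [hfe, hs_even h hK]) ?_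
      rw [hDg, ha]
      have : Df + (ε - Df / Dh) * Dh = ε * Dh := by field_simp; ring
      rw [this]; positivity
    have hlim : Tendsto (fun ε : ℝ => (∫ v, f v * hs K v ^ (p - 1) ∂μ) + (ε - Df / Dh) * Lh)
        (𝓝[>] 0) (𝓝 ((∫ v, f v * hs K v ^ (p - 1) ∂μ) + (0 - Df / Dh) * Lh)) := by
      have hc : Continuous fun ε : ℝ => (∫ v, f v * hs K v ^ (p - 1) ∂μ) + (ε - Df / Dh) * Lh := by
        fun_prop
      exact (hc.tendsto 0).mono_left nhdsWithin_le_nhds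
    have := ge_of_tendsto hlim (eventually_mem_nhdsWithin.mono fun ε hε => main ε hε)
    have e : Lh / Dh * Df = Df / Dh * Lh := by ring
    rw [e]; linarith
  refine ⟨Lh / Dh, ?_, fun f hf hfe => le_antisymm ?_ (key f hf hfe)⟩
  · refine div_nonneg (integral_nonneg fun v => ?_) hDpos.le
    exact mul_nonneg (hs_nonneg h v) (Real.rpow_nonneg (hs_nonneg h v) _)
  · have h1 := key (fun v => -f v) hf.neg (fun v => by rw [hfe])
    have e1 : ∫ x, wt q ν (fun v => -f v) x ∂theta K = -∫ x, wt q ν f x ∂theta K := by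
      rw [← integral_neg]
      refine integral_congr_ae (Eventually.of_forall fun x => ?_)
      simp only [wt]; ring
    have e2 : ∫ v, -f v * hs K v ^ (p - 1) ∂μ = -∫ v, f v * hs K v ^ (p - 1) ∂μ := by
      rw [← integral_neg]
      refine integral_congr_ae (Eventually.of_forall fun x => ?_)
      ring
    rw [e1, e2] at h1
    linarith

end
end GM

namespace GM
section
variable {E : Type*} [NormedAddCommGroup E] [InnerProductSpace ℝ E]

theorem gauge_even {K : Set E} (hK : K = -K) (x : E) : gauge K (-x) = gauge K x :=
  gauge_neg (fun y hy => by rw [hK] at hy; exact hy) x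

variable [FiniteDimensional ℝ E] [MeasurableSpace E] [BorelSpace E]

theorem theta_even {K : Set E} (h : IsBody K) (hK : K = -K) :
    (theta K).map (fun x => -x) = theta K := by
  ext A hA
  rw [Measure.map_apply measurable_neg hA, theta_apply h hA, theta_apply h (measurable_neg hA)]
  congr 1
  have : coneball K ((fun x => -x) ⁻¹' A) = -coneball K A := by
    ext x
    simp only [coneball, mem_ofPred_eq, Set.mem_neg, norm_neg, rad, gauge_even hK, mem_preimage,
      smul_neg]
  rw [this, Measure.measure_neg]

theorem sel_neg {K : Set E} (h : IsBody K) (hK : K = -K) {ν : E → E} (hν : IsSel K ν) {x : E}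
    (hx : x ∈ Reg K) : ν (-x) = -ν x := by
  have hx' : -x ∈ frontier K := by
    rw [h.frontier_iff, gauge_even hK]; exact h.frontier_iff.1 hx.1
  have := reg_unique h hx (hν.unit x) (w := -ν (-x)) (by rw [norm_neg, hν.unit]) (hν.normal x hx.1) (by
    intro y hy
    have hy' : -y ∈ K := by rw [hK] at hy; exact hy
    have := hν.normal _ hx' _ hy'
    rwa [inner_neg_left, inner_neg_left, ← inner_neg_right, ← inner_neg_right] at this)
  rw [this, neg_neg]

theorem wt_even {K : Set E} (h : IsBody K) (hK : K = -K) {ν : E → E} (hν : IsSel K ν) {q : ℝ}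
    (hq : 1 < q) {f : E → ℝ} (hf : Continuous f) : 
    ∫ x, wt q ν (fun v => f (-v)) x ∂theta K = ∫ x, wt q ν f x ∂theta K := by
  conv_rhs => rw [← theta_even h hK, integral_map measurable_neg.aemeasurable 
    (wt_meas hν hq hf.measurable).aestronglyMeasurable]
  refine integral_congr_ae ?_
  filter_upwards [theta_ae_reg h] with x hx
  simp only [wt, sel_neg h hK hν hx, norm_neg, inner_neg_neg]

/-- density of the curvature measure with respect to `theta` -/
noncomputable def wd (c q : ℝ) (ν : E → E) (x : E) : ℝ := c * (gw q ‖x‖ * ‖x‖ / ⟪x, ν x⟫)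

theorem measure_identity {K : Set E} (h : IsBody K) (hK : K = -K) {ν : E → E} (hν : IsSel K ν)
    {p q : ℝ} (hp : 1 < p) (hq : 1 < q) {μ : Measure E} [IsFiniteMeasure μ]
    (hμ : ∀ᵐ v ∂μ, ‖v‖ = 1) (hμe : μ.map (fun x => -x) = μ) {c : ℝ} (hc : 0 ≤ c)
    (hL : ∀ f : E → ℝ, Continuous f → (∀ v, f (-v) = f v) →
      ∫ v, f v * hs K v ^ (p - 1) ∂μ = c * ∫ x, wt q ν f x ∂theta K) :
    μ.withDensity (fun v => ENNReal.ofReal (hs K v ^ (p - 1))) =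
      ((theta K).withDensity (fun x => ENNReal.ofReal (wd c q ν x))).map ν := by
  have hhc := hs_cont h
  have cp1 : Continuous fun v => hs K v ^ (p - 1) :=
    (Real.continuous_rpow_const (by linarith)).comp hhc
  have hall : ∀ f : E → ℝ, Continuous f →
      ∫ v, f v * hs K v ^ (p - 1) ∂μ = c * ∫ x, wt q ν f x ∂theta K := by
    intro f hf
    have hf' : Continuous fun v => f (-v) := hf.comp continuous_neg
    have h1 := hL (fun v => f v + f (-v)) (hf.add hf') (fun v => by rw [neg_neg, add_comm])
    have e1 : ∫ v, f (-v) * hs K v ^ (p - 1) ∂μ = ∫ v, f v * hs K v ^ (p - 1) ∂μ := by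
      have cc : Continuous fun v => f v * hs K v ^ (p - 1) := hf.mul cp1
      have am : AEStronglyMeasurable (fun v => f v * hs K v ^ (p - 1)) (μ.map (fun x => -x)) :=
        cc.aestronglyMeasurable
      conv_rhs => rw [← hμe, integral_map measurable_neg.aemeasurable am]
      refine integral_congr_ae (Eventually.of_forall fun v => ?_)
      simp only [hs_even h hK]
    have e2 : ∫ v, (f v + f (-v)) * hs K v ^ (p - 1) ∂μ = 
        (∫ v, f v * hs K v ^ (p - 1) ∂μ) + ∫ v, f (-v) * hs K v ^ (p - 1) ∂μ := by
      have i1 : Integrable (fun v => f v * hs K v ^ (p - 1)) μ := int_sph hμ (hf.mul cp1)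
      have i2 : Integrable (fun v => f (-v) * hs K v ^ (p - 1)) μ := int_sph hμ (hf'.mul cp1)
      rw [← integral_add i1 i2]
      refine integral_congr_ae (Eventually.of_forall fun v => ?_)
      ring
    have e3 : ∫ x, wt q ν (fun v => f v + f (-v)) x ∂theta K =
        (∫ x, wt q ν f x ∂theta K) + ∫ x, wt q ν (fun v => f (-v)) x ∂theta K := by
      rw [← integral_add (wt_int h hν hq hf) (wt_int h hν hq hf')]
      refine integral_congr_ae (Eventually.of_forall fun v => ?_)
      simp only [wt]; ring
    rw [e2, e3, e1, wt_even h hK hν hq hf] at h1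
    linarith
  have hdm : Measurable fun v => ENNReal.ofReal (hs K v ^ (p - 1)) := cp1.measurable.ennreal_ofReal
  have hwm : Measurable (wd c q ν) := 
    ((((gw_cont hq).measurable.comp measurable_norm).mul measurable_norm).div
      (measurable_id.inner hν.meas)).const_mul c
  have hwi : Integrable (wd c q ν) (theta K) := by
    have := (wt_int h hν hq (f := fun _ => 1) continuous_const).const_mul c
    refine this.congr (Eventually.of_forall fun x => ?_)
    simp only [wt, wd]; ring
  have f1 : IsFiniteMeasure (μ.withDensity (fun v => ENNReal.ofReal (hs K v ^ (p - 1)))) :=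
    isFiniteMeasure_withDensity_ofReal (int_sph hμ cp1).2
  have f2 : IsFiniteMeasure ((theta K).withDensity (fun x => ENNReal.ofReal (wd c q ν x))) :=
    isFiniteMeasure_withDensity_ofReal hwi.2
  refine ext_of_forall_integral_eq_of_IsFiniteMeasure fun f => ?_
  rw [integral_map hν.meas.aemeasurable f.continuous.aestronglyMeasurable,
    integral_withDensity_eq_integral_toReal_smul hdm (Eventually.of_forall fun x => ENNReal.ofReal_lt_top),
    integral_withDensity_eq_integral_toReal_smul hwm.ennreal_ofReal 
      (Eventually.of_forall fun x => ENNReal.ofReal_lt_top)]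
  have h1 := hall f f.continuous
  rw [← integral_const_mul] at h1
  convert h1 using 1
  · refine integral_congr_ae (Eventually.of_forall fun v => ?_)
    simp only [smul_eq_mul]
    rw [ENNReal.toReal_ofReal (Real.rpow_nonneg (hs_nonneg h v) _), mul_comm]
  · refine integral_congr_ae ?_
    filter_upwards [theta_ae_frontier h] with x hx
    obtain ⟨r, R, hr, hR, hrK, hKR⟩ := h.exists_bounds
    have h2 := normal_lower hr hrK (hν.unit x) (hν.normal x hx)
    have h3 := gw_nonneg (q := q) (norm_nonneg x)
    have hw0 : 0 ≤ wd c q ν x := by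
      unfold wd
      exact mul_nonneg hc (div_nonneg (mul_nonneg h3 (norm_nonneg _)) (hr.le.trans h2))
    simp only [smul_eq_mul]
    rw [ENNReal.toReal_ofReal hw0, wd, wt]; ring

theorem curv_identity {K : Set E} (h : IsBody K) {ν : E → E} (hν : IsSel K ν)
    {p q : ℝ} (hq : 1 < q) {μ : Measure E} {c : ℝ} (hc : 0 ≤ c)
    (hM : μ.withDensity (fun v => ENNReal.ofReal (hs K v ^ (p - 1))) =
      ((theta K).withDensity (fun x => ENNReal.ofReal (wd c q ν x))).map ν)
    {m : ℕ} {κ : ℝ≥0∞} (hθ : theta K = surf m κ K ν)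
    {η : Set E} (hη : MeasurableSet η) (hηs : ∀ v ∈ η, ‖v‖ = 1) :
    μ η = (((m + 1 : ℕ) * κ) * ENNReal.ofReal c) * ∫⁻ x in frontier K ∩ ν ⁻¹' η,
      ENNReal.ofReal (⟪x, ν x⟫ ^ (1 - p) * ‖x‖ ^ (q - ((m + 1 : ℕ) : ℝ)) * Real.exp (-‖x‖ ^ 2 / 2))
      ∂μH[(m : ℝ)] := by
  obtain ⟨r, R, hr, hR, hrK, hKR⟩ := h.exists_bounds
  have hhc := hs_cont h
  have hdm : Measurable fun v => ENNReal.ofReal (hs K v ^ (p - 1)) := 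
    (hhc.measurable.pow_const _).ennreal_ofReal
  have hkm : Measurable fun v => ENNReal.ofReal (hs K v ^ (1 - p)) := 
    (hhc.measurable.pow_const _).ennreal_ofReal
  have hwm : Measurable (wd c q ν) := 
    ((((gw_cont hq).measurable.comp measurable_norm).mul measurable_norm).div
      (measurable_id.inner hν.meas)).const_mul c
  have hfm : MeasurableSet (frontier K) := isClosed_frontier.measurableSet
  have L : ∫⁻ v in η, ENNReal.ofReal (hs K v ^ (1 - p))
      ∂(μ.withDensity (fun v => ENNReal.ofReal (hs K v ^ (p - 1)))) = μ η := by
    rw [setLIntegral_withDensity_eq_setLIntegral_mul _ hdm hkm hη, ← setLIntegral_one]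
    refine setLIntegral_congr_fun hη fun v hv => ?_
    have h0 : 0 < hs K v := hr.trans_le (hs_lower h hr hrK (hηs v hv))
    simp only [Pi.mul_apply]
    rw [← ENNReal.ofReal_mul (by positivity), ← Real.rpow_add h0]
    simp
  have hkν : Measurable fun x => ENNReal.ofReal (hs K (ν x) ^ (1 - p)) := hkm.comp hν.meas
  rw [← L, hM, setLIntegral_map hη hkm hν.meas, setLIntegral_withDensity_eq_setLIntegral_mul _ 
    hwm.ennreal_ofReal hkν (hν.meas hη), hθ, surf]
  have hdn : Measurable fun x => ((m + 1 : ℕ) * κ) * ENNReal.ofReal (dens m ν x) :=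
    (dens_meas hν m).ennreal_ofReal.const_mul _
  rw [setLIntegral_withDensity_eq_setLIntegral_mul _ hdn 
    (hwm.ennreal_ofReal.mul hkν) (hν.meas hη), 
    Measure.restrict_restrict (hν.meas hη), inter_comm, ← lintegral_const_mul]
  · refine setLIntegral_congr_fun (hfm.inter (hν.meas hη)) fun x hx => ?_
    have h1 := hs_normal h (h.frontier_sub hx.1) (hν.normal x hx.1)
    have h2 : 0 < ⟪x, ν x⟫ := hr.trans_le (normal_lower hr hrK (hν.unit x) (hν.normal x hx.1))
    have hx0 : 0 < ‖x‖ := norm_pos_iff.2 (h.frontier_ne hx.1)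
    have h3 := gw_pos (q := q) hx0
    simp only [Pi.mul_apply]
    have hd0 : 0 < dens m ν x := by unfold dens; positivity
    have key : ENNReal.ofReal (dens m ν x) * (ENNReal.ofReal (gw q ‖x‖ * ‖x‖ / ⟪x, ν x⟫) *
        ENNReal.ofReal (⟪x, ν x⟫ ^ (1 - p))) = ENNReal.ofReal (⟪x, ν x⟫ ^ (1 - p) *
          ‖x‖ ^ (q - ((m + 1 : ℕ) : ℝ)) * Real.exp (-‖x‖ ^ 2 / 2)) := by
      rw [← ENNReal.ofReal_mul (by positivity), ← ENNReal.ofReal_mul (by positivity)]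
      congr 1
      have e1 : ‖x‖ ^ (q - ((m + 1 : ℕ) : ℝ)) = ‖x‖ ^ (q - 1) * ‖x‖ * (‖x‖ ^ (m + 1))⁻¹ := by
        rw [Real.rpow_sub hx0, Real.rpow_natCast, Real.rpow_sub_one hx0.ne']; field_simp
      rw [e1, dens, gw]; field_simp
    rw [h1, wd, ENNReal.ofReal_mul hc, ← key]
    ring
  · have := hν.meas
    exact (((measurable_id.inner hν.meas).pow_const _).mul (measurable_norm.pow_const _) |>.mul
      (by fun_prop)).ennreal_ofReal

end
end GM

theorem optimizer_solves_minkowski (n : ℕ) (hn : 2 ≤ n) (p q : ℝ) (hp : 1 < p) (hq : 1 < q)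
    (μ : Measure (EuclideanSpace ℝ (Fin n))) (hμfin : IsFiniteMeasure μ) (hμne : μ ≠ 0)
    (hμsph : μ (sphere (0 : EuclideanSpace ℝ (Fin n)) 1)ᶜ = 0)
    (hμeven : μ.map (fun x => -x) = μ)
    (K₀ : Set (EuclideanSpace ℝ (Fin n)))
    (hK₀ : IsCompact K₀ ∧ Convex ℝ K₀ ∧ (0 : EuclideanSpace ℝ (Fin n)) ∈ interior K₀ ∧ K₀ = -K₀)
    (hV₀ : gaussDualQuermass n q K₀ = (μ Set.univ).toReal)
    (hmax : ∀ K : Set (EuclideanSpace ℝ (Fin n)),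
      (IsCompact K ∧ Convex ℝ K ∧ (0 : EuclideanSpace ℝ (Fin n)) ∈ interior K ∧ K = -K) →
      gaussDualQuermass n q K = (μ Set.univ).toReal →
      PhiFunc n p μ K ≤ PhiFunc n p μ K₀) :
    ∀ ν : EuclideanSpace ℝ (Fin n) → EuclideanSpace ℝ (Fin n),
      Measurable ν →
      (∀ x, ν x ∈ sphere (0 : EuclideanSpace ℝ (Fin n)) 1) →
      (∀ x ∈ frontier K₀, ∀ y ∈ K₀, ⟪y, ν x⟫ ≤ ⟪x, ν x⟫) →
        ∀ η : Set (EuclideanSpace ℝ (Fin n)),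
          η ⊆ sphere (0 : EuclideanSpace ℝ (Fin n)) 1 → MeasurableSet η →
            μ η * lpGaussDualCurv n p q K₀ ν (sphere (0 : EuclideanSpace ℝ (Fin n)) 1) =
              μ Set.univ * lpGaussDualCurv n p q K₀ ν η := by
  intro ν hνm hνs hνn η hηs hη
  obtain ⟨m, rfl⟩ : ∃ m, n = m + 1 := ⟨n - 1, by omega⟩
  have hm : Module.finrank ℝ (EuclideanSpace ℝ (Fin (m + 1))) = m + 1 := finrank_euclideanSpace_fin
  have h : GM.IsBody K₀ := ⟨hK₀.1, hK₀.2.1, hK₀.2.2.1⟩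
  have hK : K₀ = -K₀ := hK₀.2.2.2
  have hν : GM.IsSel K₀ ν := ⟨hνm, fun x => by simpa using hνs x, hνn⟩
  have hμ : ∀ᵐ v ∂μ, ‖v‖ = 1 := by
    rw [ae_iff]
    convert hμsph using 2
    ext v; simp
  have huniv : 0 < (μ Set.univ).toReal :=
    ENNReal.toReal_pos (fun h0 => hμne (Measure.measure_univ_eq_zero.1 h0)) (measure_ne_top _ _)
  have hV : ∀ K' : Set (EuclideanSpace ℝ (Fin (m + 1))), GM.IsBody K' →
      gaussDualQuermass (m + 1) q K' = ∫ x, GM.GG q (‖x‖ / gauge K' x) ∂GM.theta K₀ :=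
    fun K' h' => GM.quermass_theta h h' hm hq
  obtain ⟨c, hc, hL⟩ := GM.lagrange h hK hν hp hq hμ (by rw [← hV K₀ h, hV₀]; exact huniv) (by
    intro K' h' hK' hVV
    rw [← hV K' h', ← hV K₀ h, hV₀] at hVV
    have h1 := hmax K' ⟨h'.compact, h'.convex, h'.zero, hK'⟩ hVV
    unfold PhiFunc at h1
    have h2 : 0 < 1 / (p * (μ Set.univ).toReal) := by positivity
    have h3 : (1 / (p * (μ Set.univ).toReal)) * ∫ v, supportFn K₀ v ^ p ∂μ ≤
        (1 / (p * (μ Set.univ).toReal)) * ∫ v, supportFn K' v ^ p ∂μ := by linarith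
    exact le_of_mul_le_mul_left h3 h2)
  have hM := GM.measure_identity h hK hν hp hq hμ hμeven hc hL
  obtain ⟨κ, hκ0, hκt, hκ⟩ := GM.slab_main (E := EuclideanSpace ℝ (Fin (m + 1))) m hm
  have hθ := GM.theta_eq h hν hm hκ
  have hdim : (((m + 1 : ℕ) : ℝ) - 1) = (m : ℝ) := by push_cast; ring
  have key : ∀ η' : Set (EuclideanSpace ℝ (Fin (m + 1))), η' ⊆ sphere 0 1 → MeasurableSet η' →
      μ η' = (((m + 1 : ℕ) * κ) * ENNReal.ofReal c) * lpGaussDualCurv (m + 1) p q K₀ ν η' := by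
    intro η' h1 h2
    have := GM.curv_identity h hν hq hc hM hθ h2 (fun v hv => by simpa using h1 hv)
    rw [lpGaussDualCurv, hdim]
    exact this
  have hS : μ Set.univ = μ (sphere 0 1) := by
    rw [← measure_add_measure_compl (μ := μ) (s := sphere 0 1) isClosed_sphere.measurableSet, hμsph,
      add_zero]
  rw [hS, key η hηs hη, key _ subset_rfl isClosed_sphere.measurableSet]
  ring
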